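/- arXiv:2306.14593 — 3 statements merged into one kernel-verified Lean document; each statement's English description precedes it below -/
import Mathlib

section
/- Let m, n ≥ 1, A ∈ ℤ^{m×n}, b ∈ ℤ^m, let I be a finite index set and p, q : I → {1, …, n}. Then there exists a restricted laVASS V of dimension 2·|I| over the alphabet Σ_n = {0,1}^n such that ⟦L(V)⟧ = {x ∈ ℕ^n : A·x = b and x_{p(i)} = 2^{x_{q(i)}} for all i ∈ I}. Moreover, there is an absolute constant c (independent of A, b, I, m, n) such that V can be chosen with at most (‖A‖_{1,∞} + ‖b‖_∞ + 2)^{c·(m+|I|)} control states. -/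
/-- A labelled affine VASS: a finite set of control states `Q`, dimension `d`, alphabet `σ`,
a finite set of transitions `Δ ⊆ Q × σ × Q`, an update function assigning to each transition
and each counter an affine function `x ↦ a·x + b` (coded by the pair `(a, b)`), an initial
control state, a set of final control states and a set of final counter values. -/
structure LAVASS (σ : Type) (d : ℕ) where
  Q : Type
  fintypeQ : Fintype Q
  Δ : Set (Q × σ × Q)
  finΔ : Δ.Finite
  upd : Q × σ × Q → Fin d → ℤ × ℤ
  init : Q
  F : Set Q
  Sf : Set (Fin d → ℕ)

namespace LAVASS

variable {σ : Type} {d : ℕ}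

/-- Configurations: a control state together with `d` counter values in `ℕ`. -/
abbrev Config (V : LAVASS σ d) := V.Q × (Fin d → ℕ)

/-- The initial configuration `(q₀, 0, …, 0)`. -/
def initConfig (V : LAVASS σ d) : V.Config := (V.init, fun _ => 0)

/-- One step of the configuration graph, reading letter `a`: there is a transition
`(q, a, q') ∈ Δ` and every counter is updated by its affine function, the result being
a natural number (non-negativity is built into the type). -/
def Step (V : LAVASS σ d) (c : V.Config) (a : σ) (c' : V.Config) : Prop :=
  (c.1, a, c'.1) ∈ V.Δ ∧
    ∀ i : Fin d,
      (c'.2 i : ℤ) = (V.upd (c.1, a, c'.1) i).1 * (c.2 i : ℤ) + (V.upd (c.1, a, c'.1) i).2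

/-- Extension of the step relation to words. -/
def Reach (V : LAVASS σ d) : V.Config → List σ → V.Config → Prop
  | c, [], c' => c = c'
  | c, a :: w, c' => ∃ c₁, Step V c a c₁ ∧ Reach V c₁ w c'

/-- The language of `V`: words leading from the initial configuration to a final one. -/
def Lang (V : LAVASS σ d) : Set (List σ) :=
  {w | ∃ c', Reach V V.initConfig w c' ∧ c'.1 ∈ V.F ∧ c'.2 ∈ V.Sf}

/-- A run from the initial configuration, as a list of successive configurations. -/
def IsRunFromInit (V : LAVASS σ d) (cs : List V.Config) : Prop :=
  cs.head? = some V.initConfig ∧ cs.Chain' (fun c c' => ∃ a, Step V c a c')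

end LAVASS

/-- Index of the counter `x_i` in a counter pair `(x_i, y_i)`. -/
def xIdx {d : ℕ} (i : Fin d) : Fin (2 * d) := ⟨2 * i.1, by omega⟩

/-- Index of the counter `y_i` in a counter pair `(x_i, y_i)`. -/
def yIdx {d : ℕ} (i : Fin d) : Fin (2 * d) := ⟨2 * i.1 + 1, by omega⟩

/-- A restricted laVASS: an laVASS of dimension `2d` whose counters form pairs `(x_i, y_i)`
such that (i) every update on `x_i` is the identity or the increment and every update on
`y_i` is `x ↦ 2x` or `x ↦ 2x+1`; (ii) along every run from the initial configuration, once
an increment is applied to `x_i`, every subsequent transition increments `x_i`; and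
(iii) the final counter values are exactly those with `x_i = y_i` for all `i`. -/
def IsRestricted {σ : Type} (d : ℕ) (V : LAVASS σ (2 * d)) : Prop :=
  (∀ t ∈ V.Δ, ∀ i : Fin d,
      (V.upd t (xIdx i) = (1, 0) ∨ V.upd t (xIdx i) = (1, 1)) ∧
      (V.upd t (yIdx i) = (2, 0) ∨ V.upd t (yIdx i) = (2, 1))) ∧
  (∀ cs : List V.Config, V.IsRunFromInit cs → ∀ i : Fin d,
      ∀ j : ℕ, ∀ hj : j + 1 < cs.length,
        (cs.get ⟨j + 1, hj⟩).2 (xIdx i) = (cs.get ⟨j, by omega⟩).2 (xIdx i) + 1 →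
        ∀ j' : ℕ, j ≤ j' → ∀ hj' : j' + 1 < cs.length,
          (cs.get ⟨j' + 1, hj'⟩).2 (xIdx i) = (cs.get ⟨j', by omega⟩).2 (xIdx i) + 1) ∧
  V.Sf = {v | ∀ i : Fin d, v (xIdx i) = v (yIdx i)}

/-- `⟦w⟧ ∈ ℕ^k`: the tuple denoted by a word over `{0,1}^k` in msd-first notation. -/
def wordVal {k : ℕ} (w : List (Fin k → Bool)) : Fin k → ℕ :=
  w.foldl (fun acc u j => 2 * acc j + (u j).toNat) fun _ => 0

/-- A language over `{0,1}^k` is zero-closed if `L = 0⃗^* · L`. -/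
def ZeroClosed {k : ℕ} (L : Set (List (Fin k → Bool))) : Prop :=
  L = {w | ∃ (p : ℕ) (u : List (Fin k → Bool)),
        u ∈ L ∧ w = List.replicate p (fun _ => false) ++ u}

/-- `‖A‖_{1,∞}`: the maximum over the rows of the sum of absolute values of the entries. -/
def matNorm {m n : ℕ} (A : Matrix (Fin m) (Fin n) ℤ) : ℕ :=
  Finset.univ.sup fun i => ∑ j, (A i j).natAbs

/-- `‖b‖_∞`: the maximum absolute value of the entries. -/
def vecNorm {m : ℕ} (b : Fin m → ℤ) : ℕ :=
  Finset.univ.sup fun i => (b i).natAbs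

/-!
Read the digits of `x` from the most significant one and keep the value of `A *ᵥ x` on the part
read so far in the control state. Reading a digit vector `u` turns a partial value `s` into
`2 * s + A *ᵥ u`, and `|A *ᵥ u| ≤ ‖A‖`; hence a partial value outside `[-B, B]`, where
`B ≥ ‖A‖`, never returns to this interval, and finitely many states suffice to decide `A *ᵥ x = b`
once also `B ≥ ‖b‖`. A number is a power of two iff its expansion has exactly one digit `1`, and
its logarithm is then the number of digits read after that `1`. A flag thus detects that `x (p i)`
is a power of two, the counter `x_i` computes its logarithm, and the counter `y_i` computes
`x (q i)`; equality of the two counters expresses `x (p i) = 2 ^ x (q i)`.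
-/

section WordVal

variable {k : ℕ}

theorem wordVal_append_singleton (w : List (Fin k → Bool)) (u : Fin k → Bool) (j : Fin k) :
    wordVal (w ++ [u]) j = 2 * wordVal w j + (u j).toNat := by
  simp [wordVal]

theorem exists_wordVal_eq_of_lt_two_pow (N : ℕ) (x : Fin k → ℕ) (hx : ∀ j, x j < 2 ^ N) :
    ∃ w, wordVal w = x := by
  induction N generalizing x with
  | zero => exact ⟨[], funext fun j => (Nat.lt_one_iff.1 (hx j)).symm⟩
  | succ N ih =>
    obtain ⟨w, hw⟩ := ih (fun j => x j / 2) fun j => Nat.div_lt_of_lt_mul (pow_succ' 2 N ▸ hx j)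
    refine ⟨w ++ [fun j => (x j).testBit 0], funext fun j => ?_⟩
    rw [wordVal_append_singleton, hw, Nat.toNat_testBit, pow_zero, Nat.div_one, Nat.div_add_mod]

theorem wordVal_surjective : Function.Surjective (wordVal (k := k)) := fun x =>
  exists_wordVal_eq_of_lt_two_pow (∑ j, x j) x fun j =>
    (Finset.single_le_sum (fun _ _ => Nat.zero_le _) (Finset.mem_univ j)).trans_lt
      Nat.lt_two_pow_self

theorem mulVec_wordVal_append_singleton {ι R : Type*} [CommSemiring R] (A : Matrix ι (Fin k) R)
    (w : List (Fin k → Bool)) (u : Fin k → Bool) :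
    A.mulVec (fun j => (wordVal (w ++ [u]) j : R)) =
      2 • A.mulVec (fun j => (wordVal w j : R)) + A.mulVec fun j => ((u j).toNat : R) := by
  rw [← Matrix.mulVec_smul, ← Matrix.mulVec_add]
  congr 1
  ext j
  simp [wordVal_append_singleton]

end WordVal

section Norms

variable {m n : ℕ}

theorem abs_mulVec_le_matNorm_mul (A : Matrix (Fin m) (Fin n) ℤ) {v : Fin n → ℤ} {C : ℕ}
    (hv : ∀ j, |v j| ≤ C) (r : Fin m) : |A.mulVec v r| ≤ matNorm A * C :=
  calc |∑ j, A r j * v j| ≤ ∑ j, |A r j * v j| := Finset.abs_sum_le_sum_abs _ _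
    _ ≤ ∑ j, |A r j| * C := Finset.sum_le_sum fun j _ => by
      rw [abs_mul]
      exact mul_le_mul_of_nonneg_left (hv j) (abs_nonneg _)
    _ = (∑ j, (A r j).natAbs : ℕ) * C := by
      rw [← Finset.sum_mul]
      simp
    _ ≤ matNorm A * C := by
      gcongr
      exact Finset.le_sup (f := fun i => ∑ j, (A i j).natAbs) (Finset.mem_univ r)

theorem abs_mulVec_toNat_le_matNorm (A : Matrix (Fin m) (Fin n) ℤ) (u : Fin n → Bool)
    (r : Fin m) : |A.mulVec (fun j => ((u j).toNat : ℤ)) r| ≤ matNorm A := by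
  have hu (j : Fin n) : |((u j).toNat : ℤ)| ≤ (1 : ℕ) := by
    simpa using Bool.toNat_le (u j)
  simpa using abs_mulVec_le_matNorm_mul A hu r

theorem abs_le_vecNorm (b : Fin m → ℤ) (r : Fin m) : |b r| ≤ vecNorm b := by
  rw [Int.abs_eq_natAbs, Int.ofNat_le]
  exact Finset.le_sup (f := fun i => (b i).natAbs) (Finset.mem_univ r)

end Norms

section Runs

theorem isChain_getElem_of_le {α : Type*} {R : α → α → Prop} {l : List α} (hl : l.IsChain R)
    {P : α → Prop} (hP : ∀ a b, R a b → P a → P b) {i j : ℕ} (hij : i ≤ j) (hj : j < l.length)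
    (hi : P l[i]) : P l[j] := by
  induction j, hij using Nat.le_induction with
  | base => exact hi
  | succ j _ ih => exact hP _ _ (hl.getElem j hj) (ih (by omega) hi)

namespace LAVASS

variable {σ : Type} {d : ℕ}

theorem reach_append (V : LAVASS σ d) (w w' : List σ) (c c' : V.Config) :
    V.Reach c (w ++ w') c' ↔ ∃ c₁, V.Reach c w c₁ ∧ V.Reach c₁ w' c' := by
  induction w generalizing c with
  | nil => simp [Reach]
  | cons a w ih =>
    simp only [List.cons_append, Reach, ih]
    tauto

theorem reach_initConfig_iff (V : LAVASS σ d) {T : List σ → V.Config → Prop}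
    (nil : ∀ c, T [] c ↔ V.initConfig = c)
    (snoc : ∀ w a c', T (w ++ [a]) c' ↔ ∃ c, T w c ∧ V.Step c a c') (w : List σ) (c : V.Config) :
    V.Reach V.initConfig w c ↔ T w c := by
  induction w using List.reverseRecOn generalizing c with
  | nil => exact (nil c).symm
  | append_singleton w a ih => simp [reach_append, Reach, snoc, ih]

end LAVASS

end Runs

section CounterPairs

variable {d : ℕ}

theorem forall_counter_iff {P : Fin (2 * d) → Prop} :
    (∀ k, P k) ↔ ∀ i : Fin d, P (xIdx i) ∧ P (yIdx i) := by
  refine ⟨fun h i => ⟨h _, h _⟩, fun h k => ?_⟩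
  rcases Nat.even_or_odd' k with ⟨i, hk | hk⟩
  · exact (Fin.ext hk : k = xIdx ⟨i, by omega⟩) ▸ (h _).1
  · exact (Fin.ext hk : k = yIdx ⟨i, by omega⟩) ▸ (h _).2

/-- The family indexed by all `2d` counters that takes the values `f` on the counters `x_i` and
`g` on the counters `y_i`. -/
def pairFun {α : Type*} (f g : Fin d → α) (k : Fin (2 * d)) : α :=
  if k.1 % 2 = 0 then f ⟨k / 2, by omega⟩ else g ⟨k / 2, by omega⟩

variable {α : Type*} (f g : Fin d → α) (i : Fin d)

@[simp]
theorem pairFun_xIdx : pairFun f g (xIdx i) = f i := by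
  simp [pairFun, xIdx]

@[simp]
theorem pairFun_yIdx : pairFun f g (yIdx i) = g i := by
  simp [pairFun, yIdx, Nat.add_mod, show (2 * i.1 + 1) / 2 = i by omega]

end CounterPairs

/-- State of a left-to-right scan for powers of two after reading the binary digits of `v`:
either only zeros have been read and the counter `k` is `0`, or the flag is set and `k` counts the
zeros after a single `1`. -/
def PowTwoScan : Bool → ℕ → ℕ → Prop
  | false, k, v => k = 0 ∧ v = 0
  | true, k, v => v = 2 ^ k

theorem powTwoScan_zero_iff (f : Bool) (k : ℕ) : PowTwoScan f k 0 ↔ f = false ∧ k = 0 := by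
  cases f <;> simp [PowTwoScan, (pow_ne_zero k (two_ne_zero (α := ℕ))).symm]

theorem powTwoScan_two_mul_add_iff (f' : Bool) (k' v : ℕ) (a : Bool) :
    PowTwoScan f' k' (2 * v + a.toNat) ↔
      ∃ f k, PowTwoScan f k v ∧ f' = (f || a) ∧ (f && a) = false ∧ k' = k + f.toNat := by
  constructor
  · intro h
    cases f' <;> cases a <;> simp only [PowTwoScan] at h
    · exact ⟨false, 0, ⟨rfl, by simp_all⟩, by simp [h.1]⟩
    · simp at h
    · obtain _ | k := k'
      · simp at h
      · exact ⟨true, k, by simpa [PowTwoScan, pow_succ'] using h, by simp⟩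
    · obtain _ | k := k'
      · exact ⟨false, 0, ⟨rfl, by simpa using h⟩, by simp⟩
      · simp only [Bool.toNat_true, pow_succ'] at h
        omega
  · rintro ⟨f, k, h, rfl, hfa, rfl⟩
    cases f <;> cases a <;> simp_all [PowTwoScan, pow_succ']

section Automaton

variable {m n d : ℕ} (A : Matrix (Fin m) (Fin n) ℤ) (b : Fin m → ℤ) (B : ℕ) (p q : Fin d → Fin n)

/-- The restricted laVASS for `A *ᵥ x = b` and `x (p i) = 2 ^ x (q i)`. A control state consists
of the value of `A *ᵥ x` on the digits read so far, confined to `[-B, B]`, and for each `i` a flag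
telling whether a digit `1` of `x (p i)` has been read; a second such digit is blocked. The counter
`x_i` is incremented once the flag is set, and `y_i` accumulates `x (q i)`. -/
noncomputable def semenovLAVASS : LAVASS (Fin n → Bool) (2 * d) where
  Q := (Fin m → Set.Icc (-B : ℤ) B) × (Fin d → Bool)
  fintypeQ := inferInstance
  Δ := {t | (∀ r, (t.2.2.1 r : ℤ) = 2 * t.1.1 r + A.mulVec (fun j => ((t.2.1 j).toNat : ℤ)) r) ∧
    ∀ i, t.2.2.2 i = (t.1.2 i || t.2.1 (p i)) ∧ (t.1.2 i && t.2.1 (p i)) = false}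
  finΔ := Set.toFinite _
  upd t := pairFun (fun i => (1, ((t.1.2 i).toNat : ℤ))) (fun i => (2, ((t.2.1 (q i)).toNat : ℤ)))
  init := (fun _ => ⟨0, by simp⟩, fun _ => false)
  F := {s | (∀ r, (s.1 r : ℤ) = b r) ∧ ∀ i, s.2 i = true}
  Sf := {v | ∀ i : Fin d, v (xIdx i) = v (yIdx i)}

namespace semenovLAVASS

variable {A b B p q}

theorem step_iff {c c' : (semenovLAVASS A b B p q).Config} {u : Fin n → Bool} :
    (semenovLAVASS A b B p q).Step c u c' ↔
      (∀ r, (c'.1.1 r : ℤ) = 2 * c.1.1 r + A.mulVec (fun j => ((u j).toNat : ℤ)) r) ∧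
      (∀ i, c'.1.2 i = (c.1.2 i || u (p i)) ∧ (c.1.2 i && u (p i)) = false) ∧
      ∀ i, c'.2 (xIdx i) = c.2 (xIdx i) + (c.1.2 i).toNat ∧
        c'.2 (yIdx i) = 2 * c.2 (yIdx i) + (u (q i)).toNat := by
  simp only [LAVASS.Step, forall_counter_iff, semenovLAVASS, pairFun_xIdx, pairFun_yIdx,
    one_mul]
  norm_cast
  exact and_assoc

theorem xIdx_eq_add_one_iff_flag {c c' : (semenovLAVASS A b B p q).Config} {u : Fin n → Bool}
    (h : (semenovLAVASS A b B p q).Step c u c') (i : Fin d) :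
    c'.2 (xIdx i) = c.2 (xIdx i) + 1 ↔ c.1.2 i = true := by
  rw [((step_iff.1 h).2.2 i).1]
  cases c.1.2 i <;> simp

theorem flag_of_step {c c' : (semenovLAVASS A b B p q).Config} {u : Fin n → Bool}
    (h : (semenovLAVASS A b B p q).Step c u c') {i : Fin d} (hc : c.1.2 i = true) :
    c'.1.2 i = true := by
  rw [((step_iff.1 h).2.1 i).1, hc, Bool.true_or]

variable (A b B p q)

theorem isRestricted : IsRestricted d (semenovLAVASS A b B p q) := by
  refine ⟨fun t _ i => ?_, fun cs ⟨_, hcs⟩ i j hj hinc j' hjj' hj' => ?_, rfl⟩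
  · simp only [semenovLAVASS, pairFun_xIdx, pairFun_yIdx]
    cases t.1.2 i <;> cases t.2.1 (q i) <;> simp
  · have step (k : ℕ) (hk : k + 1 < cs.length) :
        ∃ u, (semenovLAVASS A b B p q).Step cs[k] u cs[k + 1] := hcs.getElem k hk
    obtain ⟨u, hu⟩ := step j hj
    obtain ⟨u', hu'⟩ := step j' hj'
    have flag_j : cs[j].1.2 i = true := (xIdx_eq_add_one_iff_flag hu i).1 hinc
    have flag_j' : cs[j'].1.2 i = true :=
      isChain_getElem_of_le hcs (P := fun c => c.1.2 i = true)
        (fun _ _ ⟨_, h⟩ => flag_of_step h) hjj' (by omega) flag_j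
    exact (xIdx_eq_add_one_iff_flag hu' i).2 flag_j'

theorem card_states : @Fintype.card (semenovLAVASS A b B p q).Q (semenovLAVASS A b B p q).fintypeQ =
    (2 * B + 1) ^ m * 2 ^ d := by
  change Fintype.card ((Fin m → Set.Icc (-B : ℤ) B) × (Fin d → Bool)) = _
  have card_Icc : Fintype.card (Set.Icc (-B : ℤ) B) = 2 * B + 1 := by
    have := Int.card_fintype_Icc_of_le (-B) B (by omega)
    omega
  simp [card_Icc]

theorem card_states_le :
    @Fintype.card (semenovLAVASS A b B p q).Q (semenovLAVASS A b B p q).fintypeQ ≤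
      (B + 2) ^ (2 * (m + d)) := by
  rw [card_states, pow_mul, pow_add]
  gcongr
  · nlinarith
  · exact (Nat.le_add_left 2 B).trans (Nat.le_self_pow two_ne_zero _)

variable {A b B p q}

/-- The invariant satisfied by the configuration reached after reading `w`. -/
structure Tracks (w : List (Fin n → Bool)) (c : (semenovLAVASS A b B p q).Config) : Prop where
  mulVec : ∀ r, (c.1.1 r : ℤ) = A.mulVec (fun j => (wordVal w j : ℤ)) r
  scan : ∀ i, PowTwoScan (c.1.2 i) (c.2 (xIdx i)) (wordVal w (p i))
  yIdx : ∀ i, c.2 (yIdx i) = wordVal w (q i)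

theorem tracks_nil_iff (c : (semenovLAVASS A b B p q).Config) :
    Tracks [] c ↔ (semenovLAVASS A b B p q).initConfig = c := by
  constructor
  · rintro ⟨hs, hf, hy⟩
    have initial (i : Fin d) : c.1.2 i = false ∧ c.2 (xIdx i) = 0 :=
      (powTwoScan_zero_iff _ _).1 (hf i)
    refine Prod.ext (Prod.ext (funext fun r => Subtype.ext ?_) (funext fun i => ?_)) (funext ?_)
    · rw [hs r]
      simp [wordVal, LAVASS.initConfig, semenovLAVASS, Matrix.mulVec, dotProduct]
    · exact (initial i).1.symm
    · exact forall_counter_iff.2 fun i => ⟨(initial i).2.symm, (hy i).symm⟩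
  · rintro rfl
    constructor <;>
      simp [LAVASS.initConfig, semenovLAVASS, wordVal, PowTwoScan, Matrix.mulVec, dotProduct]

theorem Tracks.append_singleton {w : List (Fin n → Bool)} {u : Fin n → Bool}
    {c c' : (semenovLAVASS A b B p q).Config} (h : Tracks w c)
    (hstep : (semenovLAVASS A b B p q).Step c u c') : Tracks (w ++ [u]) c' := by
  obtain ⟨hs, hf, hxy⟩ := step_iff.1 hstep
  refine ⟨fun r => ?_, fun i => ?_, fun i => ?_⟩
  · simp [hs r, h.mulVec r, mulVec_wordVal_append_singleton]
  · rw [wordVal_append_singleton, powTwoScan_two_mul_add_iff]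
    exact ⟨_, _, h.scan i, (hf i).1, (hf i).2, (hxy i).1⟩
  · rw [(hxy i).2, h.yIdx i, wordVal_append_singleton]

theorem Tracks.exists_step (hA : matNorm A ≤ B) {w : List (Fin n → Bool)} {u : Fin n → Bool}
    {c' : (semenovLAVASS A b B p q).Config} (h : Tracks (w ++ [u]) c') :
    ∃ c, Tracks w c ∧ (semenovLAVASS A b B p q).Step c u c' := by
  have hs (r : Fin m) : (c'.1.1 r : ℤ) = 2 * A.mulVec (fun j => (wordVal w j : ℤ)) r +
      A.mulVec (fun j => ((u j).toNat : ℤ)) r := by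
    simp [h.mulVec r, mulVec_wordVal_append_singleton]
  have mem_Icc (r : Fin m) :
      A.mulVec (fun j => (wordVal w j : ℤ)) r ∈ Set.Icc (-B : ℤ) B := by
    have hu := abs_le.1 (abs_mulVec_toNat_le_matNorm A u r)
    have hc' := (c'.1.1 r).2
    have := hs r
    rw [Set.mem_Icc] at hc' ⊢
    omega
  have hscan (i : Fin d) := (powTwoScan_two_mul_add_iff _ _ _ _).1
    (wordVal_append_singleton w u (p i) ▸ h.scan i)
  choose f k hfk hf hblock hx using hscan
  refine ⟨((fun r => ⟨_, mem_Icc r⟩, f), pairFun k fun i => wordVal w (q i)),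
    ⟨fun _ => rfl, ?_, ?_⟩, step_iff.2 ⟨hs, fun i => ⟨hf i, hblock i⟩, fun i => ?_⟩⟩
  · simpa using hfk
  · simp
  · simp [hx i, h.yIdx i, wordVal_append_singleton]

theorem reach_iff_tracks (hA : matNorm A ≤ B) (w : List (Fin n → Bool))
    (c : (semenovLAVASS A b B p q).Config) :
    (semenovLAVASS A b B p q).Reach (semenovLAVASS A b B p q).initConfig w c ↔ Tracks w c :=
  LAVASS.reach_initConfig_iff _ tracks_nil_iff
    (fun _ _ _ => ⟨Tracks.exists_step hA, fun ⟨_, h, hstep⟩ => h.append_singleton hstep⟩) w c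

theorem mem_lang_iff (hA : matNorm A ≤ B) (hb : vecNorm b ≤ B) (w : List (Fin n → Bool)) :
    w ∈ (semenovLAVASS A b B p q).Lang ↔ A.mulVec (fun j => (wordVal w j : ℤ)) = b ∧
      ∀ i, wordVal w (p i) = 2 ^ wordVal w (q i) := by
  simp only [LAVASS.Lang, Set.mem_ofPred_eq, reach_iff_tracks hA]
  constructor
  · rintro ⟨c, h, ⟨hs, hf⟩, hxy⟩
    refine ⟨funext fun r => (h.mulVec r).symm.trans (hs r), fun i => ?_⟩
    have := h.scan i
    rwa [hf i, hxy i, h.yIdx i] at this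
  · rintro ⟨hs, hpow⟩
    have mem_Icc (r : Fin m) : b r ∈ Set.Icc (-B : ℤ) B :=
      abs_le.1 ((abs_le_vecNorm b r).trans (mod_cast hb))
    let y := fun i => wordVal w (q i)
    refine ⟨((fun r => ⟨b r, mem_Icc r⟩, fun _ => true), pairFun y y), ⟨?_, ?_, ?_⟩, ⟨?_, ?_⟩, ?_⟩
    · exact fun r => (congrFun hs r).symm
    · simpa [PowTwoScan, y] using hpow
    · simp [y]
    · exact fun _ => rfl
    · exact fun _ => rfl
    · simp [semenovLAVASS]

theorem wordVal_image_lang (hA : matNorm A ≤ B) (hb : vecNorm b ≤ B) :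
    wordVal '' (semenovLAVASS A b B p q).Lang =
      {x | A.mulVec (fun j => (x j : ℤ)) = b ∧ ∀ i, x (p i) = 2 ^ x (q i)} := by
  rw [← Set.image_preimage_eq {x | _} wordVal_surjective]
  congr 1
  exact Set.ext (mem_lang_iff hA hb)

end semenovLAVASS

end Automaton

/-- For `m, n ≥ 1`, `A ∈ ℤ^{m×n}`, `b ∈ ℤ^m`, a finite index set `ι` and `p, q : ι → {1,…,n}`,
there is a restricted laVASS `V` of dimension `2·|ι|` over `{0,1}^n` with
`⟦L(V)⟧ = {x ∈ ℕ^n : A·x = b ∧ x_{p(i)} = 2^{x_{q(i)}} for all i}`, whose number of control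
states is at most `(‖A‖_{1,∞} + ‖b‖_∞ + 2)^{c·(m+|ι|)}` for an absolute constant `c`. -/
theorem conjunctive_semenov_lavass :
    ∃ c : ℕ, ∀ (m n : ℕ), 1 ≤ m → 1 ≤ n →
      ∀ (A : Matrix (Fin m) (Fin n) ℤ) (b : Fin m → ℤ)
        (ι : Type) [Fintype ι] (p q : ι → Fin n),
        ∃ V : LAVASS (Fin n → Bool) (2 * Fintype.card ι),
          IsRestricted (Fintype.card ι) V ∧
          @Fintype.card V.Q V.fintypeQ ≤
            (matNorm A + vecNorm b + 2) ^ (c * (m + Fintype.card ι)) ∧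
          wordVal '' V.Lang =
            {x : Fin n → ℕ |
              A.mulVec (fun j => (x j : ℤ)) = b ∧ ∀ i : ι, x (p i) = 2 ^ x (q i)} := by
  refine ⟨2, fun m n _ _ A b ι _ p q => ?_⟩
  let e := (Fintype.equivFin ι).symm
  refine ⟨semenovLAVASS A b (matNorm A + vecNorm b) (p ∘ e) (q ∘ e),
    semenovLAVASS.isRestricted .., semenovLAVASS.card_states_le .., ?_⟩
  rw [semenovLAVASS.wordVal_image_lang (Nat.le_add_right _ _) (Nat.le_add_left _ _)]
  simp only [Function.comp_apply, e.surjective.forall]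
end

section
/- Language emptiness of restricted laVASS is decidable: there exists a computable function g from (encodings of) laVASS presented as finite data (control states {0, …, |Q|−1}, alphabet {0, …, |Σ|−1}, a finite transition list, the integer coefficients of the affine updates, the initial state, the final states, and the final-counter-value condition m_i = n_i for every counter pair) to Bool such that, for every such input V that is a restricted laVASS, g(V) = true if and only if L(V) ≠ ∅. (The paper moreover shows the problem lies in NSPACE(|V| · 2^{O(d)}).) -/
/-- An laVASS presented as finite data: control states `{0, …, states − 1}`, `pairs` counter
pairs (so `2 * pairs` counters), alphabet `{0, …, alpha − 1}`, a finite list of transitions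
`(q, a, q', upd)` where `upd` lists, for each counter, the pair `(a_i, b_i)` of coefficients
of its affine update `x ↦ a_i·x + b_i`, an initial state and a list of final states. The
final-counter-value condition is `x_i = y_i` for every counter pair. -/
structure RawVASS where
  states : ℕ
  pairs : ℕ
  alpha : ℕ
  trans : List (ℕ × ℕ × ℕ × List (ℤ × ℤ))
  init : ℕ
  finals : List ℕ

/-- A configuration: a control state and the list of counter values. -/
abbrev RawConfig : Type := ℕ × List ℕ

/-- One step of the configuration graph, reading letter `a`: some transition
`(q, a, q', upd)` applies all its affine updates, every resulting counter value being a
natural number (non-negativity is built into the type). -/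
def RawVASS.StepR (V : RawVASS) (c : RawConfig) (a : ℕ) (c' : RawConfig) : Prop :=
  ∃ u : List (ℤ × ℤ), (c.1, a, c'.1, u) ∈ V.trans ∧ c'.2.length = c.2.length ∧
    ∀ j < c.2.length,
      (c'.2.getD j 0 : ℤ) =
        (u.getD j ((1 : ℤ), (0 : ℤ))).1 * (c.2.getD j 0 : ℤ) + (u.getD j ((1 : ℤ), (0 : ℤ))).2

/-- Extension of the step relation to words. -/
def RawVASS.ReachR (V : RawVASS) : RawConfig → List ℕ → RawConfig → Prop
  | c, [], c' => c = c'
  | c, a :: w, c' => ∃ c₁, RawVASS.StepR V c a c₁ ∧ RawVASS.ReachR V c₁ w c'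

/-- The initial configuration `(q₀, 0, …, 0)`. -/
def RawVASS.initConfig (V : RawVASS) : RawConfig := (V.init, List.replicate (2 * V.pairs) 0)

/-- The language of `V`: words over the alphabet leading from the initial configuration to
a configuration with a final control state satisfying `x_i = y_i` for every counter pair. -/
def RawVASS.Lang (V : RawVASS) : Set (List ℕ) :=
  {w | (∀ a ∈ w, a < V.alpha) ∧
       ∃ c' : RawConfig, V.ReachR V.initConfig w c' ∧ c'.1 ∈ V.finals ∧
         ∀ i < V.pairs, c'.2.getD (2 * i) 0 = c'.2.getD (2 * i + 1) 0}

/-- A run from the initial configuration, as a list of successive configurations. -/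
def RawVASS.IsRunFromInit (V : RawVASS) (cs : List RawConfig) : Prop :=
  cs.head? = some V.initConfig ∧ cs.Chain' (fun c c' => ∃ a, V.StepR c a c')

/-- The input is a restricted laVASS: (i) in every transition, every update on an
`x`-counter (even index) is the identity `(1,0)` or the increment `(1,1)` and every update
on a `y`-counter (odd index) is `x ↦ 2x` or `x ↦ 2x+1`; (ii) along every run from the
initial configuration, once an `x`-counter is incremented it is incremented by every
subsequent transition. -/
def RawVASS.Restricted (V : RawVASS) : Prop :=
  (∀ t ∈ V.trans, t.2.2.2.length = 2 * V.pairs ∧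
     ∀ i < V.pairs,
       (t.2.2.2.getD (2 * i) ((1 : ℤ), (0 : ℤ)) = (1, 0) ∨
        t.2.2.2.getD (2 * i) ((1 : ℤ), (0 : ℤ)) = (1, 1)) ∧
       (t.2.2.2.getD (2 * i + 1) ((1 : ℤ), (0 : ℤ)) = (2, 0) ∨
        t.2.2.2.getD (2 * i + 1) ((1 : ℤ), (0 : ℤ)) = (2, 1))) ∧
  (∀ cs : List RawConfig, V.IsRunFromInit cs → ∀ i < V.pairs, ∀ j : ℕ,
     j + 1 < cs.length →
     (cs.getD (j + 1) default).2.getD (2 * i) 0 = (cs.getD j default).2.getD (2 * i) 0 + 1 →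
     ∀ j', j ≤ j' → j' + 1 < cs.length →
       (cs.getD (j' + 1) default).2.getD (2 * i) 0 =
         (cs.getD j' default).2.getD (2 * i) 0 + 1)

/-- Gödel encoding of the finite data presenting an laVASS. -/
def RawVASS.enc (V : RawVASS) : ℕ :=
  Encodable.encode (V.states, V.pairs, V.alpha, V.trans, V.init, V.finals)

/-!
Once an `x`-counter is incremented it is incremented until the end, and `y`-counters only grow by
appending binary digits. Hence, if an accepting run ends with `x_i = y_i = m_i`, then `t` steps
before the end `x_i = m_i - t` (truncated) and `y_i = ⌊m_i / 2 ^ t⌋`. Read backwards, the run is a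
word over bit vectors determined by the vector `m` and the length of the run, and being a run is
recognised by a finite automaton. The question becomes whether this automaton accepts such a word.

Suppose that the largest counter `m_i` is huge, and let `n` be the second largest counter or the
number of binary digits of `m_i`, whichever is larger. Between the letters `n` and `m_i` only
counter `i` is active and its digits are exhausted, so the automaton reads `m_i - n` copies of one
letter, and the transformation of states this induces can be computed from the digits of `m_i`. All
these digits lie in the prefix of length `n`, so a larger automaton can guess them while reading the
prefix, which eliminates counter `i`. Iterating yields a primitive recursive bound on the length of
a shortest accepted word, so a bounded search decides emptiness.
-/

section FiniteMonoid

variable {G : Type*} [Monoid G] [Finite G]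

lemma exists_lt_le_card_pow_eq (T : G) : ∃ i j, i < j ∧ j ≤ Nat.card G ∧ T ^ i = T ^ j := by
  have : Fintype G := Fintype.ofFinite G
  obtain ⟨i, j, hij, hpow⟩ := Fintype.exists_ne_map_eq_of_card_lt
    (fun k : Fin (Nat.card G + 1) => T ^ k.1) (by simp [Nat.card_eq_fintype_card])
  rcases lt_or_gt_of_ne hij with h | h
  · exact ⟨i, j, h, Nat.le_of_lt_succ j.2, hpow⟩
  · exact ⟨j, i, h, Nat.le_of_lt_succ i.2, hpow.symm⟩

lemma exists_lt_card_pow_eq (T : G) (n : ℕ) : ∃ r < Nat.card G, T ^ r = T ^ n := by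
  induction n using Nat.strong_induction_on with
  | _ n ih =>
    rcases lt_or_ge n (Nat.card G) with hn | hn
    · exact ⟨n, hn, rfl⟩
    obtain ⟨i, j, hij, hj, hpow⟩ := exists_lt_le_card_pow_eq T
    obtain ⟨r, hr, hrn⟩ := ih (i + (n - j)) (by omega)
    refine ⟨r, hr, ?_⟩
    rw [hrn, pow_add, hpow, ← pow_add, Nat.add_sub_cancel' (hj.trans hn)]

/-- Powers of `T` are eventually periodic, so subtracting `n` from a large exponent amounts to
adding a fixed multiple of `n`. -/
lemma exists_pow_sub_eq_pow_add_mul (T : G) :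
    ∃ c, ∀ M n, n + Nat.card G ≤ M → T ^ (M - n) = T ^ (M + c * n) := by
  obtain ⟨i, j, hij, hj, hpow⟩ := exists_lt_le_card_pow_eq T
  have hperiod : ∀ x, Nat.card G ≤ x → T ^ (x + (j - i)) = T ^ x := fun x hx => by
    rw [show x + (j - i) = j + (x - i) by omega, pow_add, ← hpow, ← pow_add,
      Nat.add_sub_cancel' (by omega)]
  have hperiods : ∀ x, Nat.card G ≤ x → ∀ y, T ^ (x + (j - i) * y) = T ^ x := by
    intro x hx y
    induction y with
    | zero => simp
    | succ y ih => rw [mul_add_one, ← add_assoc, hperiod _ (by omega), ih]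
  refine ⟨j - i - 1, fun M n h => ?_⟩
  rw [← hperiods (M - n) (by omega) n]
  obtain ⟨c, hc⟩ : ∃ c, j - i = c + 1 := ⟨j - i - 1, by omega⟩
  rw [hc, add_one_mul, Nat.add_sub_cancel, ← add_assoc, add_right_comm,
    Nat.sub_add_cancel (by omega)]

end FiniteMonoid

section NFA

variable {α σ τ : Type*}

/-- The transformation of state sets induced by reading a letter, as an element of the
transformation monoid, so that reading the letter `k` times is its `k`-th power. -/
def letterMap (A : NFA α σ) (a : α) : Function.End (Set σ) := fun S => A.stepSet S a

lemma evalFrom_replicate (A : NFA α σ) (S : Set σ) (k : ℕ) (a : α) :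
    A.evalFrom S (List.replicate k a) = (letterMap A a ^ k) S := by
  induction k generalizing S with
  | zero => rfl
  | succ k ih => rw [List.replicate_succ, NFA.evalFrom_cons, ih, pow_succ]; rfl

lemma mem_acceptsFrom_iff_exists_singleton (A : NFA α σ) (S : Set σ) (x : List α) :
    x ∈ A.acceptsFrom S ↔ ∃ q ∈ S, x ∈ A.acceptsFrom {q} := by
  simp only [NFA.mem_acceptsFrom]
  constructor
  · rintro ⟨s, hs, hmem⟩
    obtain ⟨q, hq, hqs⟩ := NFA.mem_evalFrom_iff_exists.1 hmem
    exact ⟨q, hq, s, hs, hqs⟩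
  · rintro ⟨q, hq, s, hs, hmem⟩
    exact ⟨s, hs, NFA.mem_evalFrom_iff_exists.2 ⟨q, hq, hmem⟩⟩

/-- The product of `A` with a deterministic monitor. On a letter `a` satisfying `guard`, a bit `b`
is guessed; the monitor moves by `next` and `A` reads the letter `out x a b`. -/
def guessProduct (A : NFA α σ) (guard : α → Prop) (out : τ → α → Bool → α)
    (next : τ → α → Bool → τ) (x₀ : τ) (F : Set (σ × τ)) : NFA α (σ × τ) where
  step p a := {p' | guard a ∧ ∃ b, p'.1 ∈ A.step p.1 (out p.2 a b) ∧ p'.2 = next p.2 a b}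
  start := {p | p.1 ∈ A.start ∧ p.2 = x₀}
  accept := F

lemma exists_testBit_extension {E n : ℕ} (hE : E < 2 ^ n) (b : Bool) :
    ∃ E' < 2 ^ (n + 1), E'.testBit n = b ∧ ∀ t < n, E'.testBit t = E.testBit t := by
  refine ⟨2 ^ n * b.toNat + E, ?_, ?_, fun t ht => ?_⟩
  · have := Nat.mul_le_mul_left (2 ^ n) b.toNat_le
    rw [pow_succ]; omega
  · rw [Nat.testBit_two_pow_mul_add _ hE]; cases b <;> simp
  · rw [Nat.testBit_two_pow_mul_add _ hE, if_pos ht]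

lemma monitor_congr {next : τ → α → Bool → τ} {x₀ : τ} {w : ℕ → α} {v : ℕ → ℕ → τ}
    (hzero : ∀ E, v E 0 = x₀) (hsucc : ∀ E t, v E (t + 1) = next (v E t) (w t) (E.testBit t))
    {E E' t : ℕ} (h : ∀ s < t, E.testBit s = E'.testBit s) : v E t = v E' t := by
  induction t with
  | zero => rw [hzero, hzero]
  | succ t ih =>
    rw [hsucc, hsucc, ih fun s hs => h s (hs.trans t.lt_succ_self), h t t.lt_succ_self]

/-- The guessed bits are the binary digits of a number `E`, and `v E` is the resulting run of the
monitor. -/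
lemma mem_evalFrom_guessProduct {A : NFA α σ} {guard : α → Prop} {out : τ → α → Bool → α}
    {next : τ → α → Bool → τ} {x₀ : τ} {F : Set (σ × τ)} {w : ℕ → α} {v : ℕ → ℕ → τ}
    (hzero : ∀ E, v E 0 = x₀) (hsucc : ∀ E t, v E (t + 1) = next (v E t) (w t) (E.testBit t))
    (n : ℕ) (p : σ × τ) :
    p ∈ (guessProduct A guard out next x₀ F).evalFrom (guessProduct A guard out next x₀ F).start
        ((List.range n).map w) ↔
      (∀ t < n, guard (w t)) ∧ ∃ E < 2 ^ n, p.2 = v E n ∧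
        p.1 ∈ A.evalFrom A.start
          ((List.range n).map fun t => out (v E t) (w t) (E.testBit t)) := by
  have hword : ∀ {E E' n : ℕ}, (∀ s < n, E.testBit s = E'.testBit s) →
      (List.range n).map (fun t => out (v E t) (w t) (E.testBit t)) =
        (List.range n).map fun t => out (v E' t) (w t) (E'.testBit t) := by
    intro E E' n h
    refine List.map_congr_left fun t ht => ?_
    rw [List.mem_range] at ht
    rw [monitor_congr hzero hsucc fun s hs => h s (hs.trans ht), h t ht]
  induction n generalizing p with
  | zero =>
    simp only [List.range_zero, List.map_nil, NFA.evalFrom_nil, pow_zero, Nat.lt_one_iff,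
      exists_eq_left, hzero]
    simp [guessProduct, and_comm]
  | succ n ih =>
    simp only [List.range_succ, List.map_append, List.map_singleton, NFA.evalFrom_append,
      NFA.evalFrom_singleton, NFA.mem_stepSet]
    constructor
    · rintro ⟨p₀, hp₀, hguard, b, hstep, hnext⟩
      obtain ⟨hguards, E, hE, hv, heval⟩ := (ih p₀).1 hp₀
      obtain ⟨E', hE', hb, hlow⟩ := exists_testBit_extension hE b
      refine ⟨Nat.forall_lt_succ_right.2 ⟨hguards, hguard⟩, E', hE', ?_, p₀.1, ?_, ?_⟩
      · rw [hsucc, monitor_congr hzero hsucc hlow, hb, ← hv, hnext]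
      · rwa [hword hlow]
      · rwa [monitor_congr hzero hsucc hlow, hb, ← hv]
    · rintro ⟨hguards, E, -, hv, q, hq, hstep⟩
      obtain ⟨hguards, hguard⟩ := Nat.forall_lt_succ_right.1 hguards
      have hlow : ∀ t < n, E.testBit t = (E % 2 ^ n).testBit t := fun t ht => by
        simp [Nat.testBit_mod_two_pow, ht]
      refine ⟨(q, v E n), (ih _).2 ⟨hguards, E % 2 ^ n, Nat.mod_lt _ (by positivity),
        monitor_congr hzero hsucc hlow, ?_⟩, hguard, E.testBit n, hstep, ?_⟩
      · rwa [← hword hlow]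
      · rw [hv, hsucc]

lemma mem_accepts_guessProduct {A : NFA α σ} {guard : α → Prop} {out : τ → α → Bool → α}
    {next : τ → α → Bool → τ} {x₀ : τ} {F : Set (σ × τ)} {w : ℕ → α} {v : ℕ → ℕ → τ}
    (hzero : ∀ E, v E 0 = x₀) (hsucc : ∀ E t, v E (t + 1) = next (v E t) (w t) (E.testBit t))
    (n : ℕ) :
    (List.range n).map w ∈ (guessProduct A guard out next x₀ F).accepts ↔
      (∀ t < n, guard (w t)) ∧ ∃ E < 2 ^ n, ∃ q ∈ A.evalFrom A.start
        ((List.range n).map fun t => out (v E t) (w t) (E.testBit t)), (q, v E n) ∈ F := by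
  simp only [NFA.mem_accepts, mem_evalFrom_guessProduct hzero hsucc]
  constructor
  · rintro ⟨⟨q, x⟩, hF, hguard, E, hE, rfl, hq⟩
    exact ⟨hguard, E, hE, q, hq, hF⟩
  · rintro ⟨hguard, E, hE, q, hq, hF⟩
    exact ⟨(q, v E n), hF, hguard, E, hE, rfl, hq⟩

end NFA

/-- A letter over `ι` tracks: track `i` carries a binary digit and a flag telling whether the
counter is still being incremented. -/
abbrev Track (ι : Type*) : Type _ := ι → Bool × Bool

section Tracks

variable {ι σ : Type*}

/-- The letter describing the final counter values `m` when `t` steps remain. Going backwards,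
`y_i = ⌊m_i / 2^t⌋` loses the digit `t` of `m_i` and `x_i = m_i - t` decreases while `t < m_i`. -/
def trackLetter (m : ι → ℕ) (t : ℕ) : Track ι := fun i => ((m i).testBit t, decide (t < m i))

/-- The word describing a whole run of length `n` with final counter values `m`, read backwards. -/
def trackWord (m : ι → ℕ) (n : ℕ) : List (Track ι) := (List.range n).map (trackLetter m)

/-- `m` is a possible vector of final values of a run of length `n` controlled by `A`. The bound
`m i ≤ n` says that the counter `x_i` starts at `0`. -/
def IsSolution (A : NFA (Track ι) σ) (m : ι → ℕ) (n : ℕ) : Prop :=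
  (∀ i, m i ≤ n) ∧ trackWord m n ∈ A.accepts

/-- The letter read when all counters are exhausted. -/
def blankLetter (ι : Type*) : Track ι := fun _ => (false, false)

/-- The letter read when only counter `i` is still incremented and its digits are exhausted. -/
def soloLetter [DecidableEq ι] (i : ι) : Track ι := Function.update (blankLetter ι) i (false, true)

lemma testBit_eq_false_of_le {x t : ℕ} (h : x ≤ t) : x.testBit t = false :=
  Nat.testBit_eq_false_of_lt (h.trans_lt Nat.lt_two_pow_self)

lemma trackLetter_eq_blankLetter {m : ι → ℕ} {t : ℕ} (h : ∀ i, m i ≤ t) :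
    trackLetter m t = blankLetter ι :=
  funext fun i => by simp [trackLetter, blankLetter, testBit_eq_false_of_le (h i), h i]

lemma trackLetter_update [DecidableEq ι] (m : ι → ℕ) (i : ι) {M t : ℕ} (h : t < M) :
    trackLetter (Function.update m i M) t =
      Function.update (trackLetter m t) i (M.testBit t, true) := by
  funext k
  rcases eq_or_ne k i with rfl | hk
  · simp [trackLetter, h]
  · simp [trackLetter, hk]

lemma trackLetter_eq_soloLetter [DecidableEq ι] {m : ι → ℕ} {i : ι} {t : ℕ}
    (hothers : ∀ k ≠ i, m k ≤ t) (ht : t < m i) (hpow : m i < 2 ^ t) :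
    trackLetter m t = soloLetter i := by
  funext k
  rcases eq_or_ne k i with rfl | hk
  · simp [trackLetter, soloLetter, ht, Nat.testBit_lt_two_pow hpow]
  · simp [trackLetter, soloLetter, blankLetter, hk, hothers k hk,
      testBit_eq_false_of_le (hothers k hk)]

lemma trackWord_add (m : ι → ℕ) (n k : ℕ) :
    trackWord m (n + k) =
      trackWord m n ++ (List.range k).map fun t => trackLetter m (n + t) := by
  simp [trackWord, List.range_add, Function.comp_def]

lemma trackWord_add_of_le {m : ι → ℕ} {n : ℕ} (h : ∀ i, m i ≤ n) (k : ℕ) :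
    trackWord m (n + k) = trackWord m n ++ List.replicate k (blankLetter ι) := by
  rw [trackWord_add, List.map_congr_left fun t _ =>
    trackLetter_eq_blankLetter fun i => (h i).trans (n.le_add_right t)]
  simp

lemma trackWord_eq_append_solo [DecidableEq ι] {m : ι → ℕ} {i : ι} {n : ℕ}
    (hothers : ∀ k ≠ i, m k ≤ n) (hle : n ≤ m i) (hpow : m i < 2 ^ n) :
    trackWord m (m i) = trackWord m n ++ List.replicate (m i - n) (soloLetter i) := by
  conv_lhs => rw [← Nat.add_sub_cancel' hle]
  rw [trackWord_add, List.map_congr_left fun t ht =>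
    trackLetter_eq_soloLetter (fun k hk => (hothers k hk).trans (n.le_add_right t))
      (by have := List.mem_range.1 ht; omega)
      (hpow.trans_le (Nat.pow_le_pow_right two_pos (n.le_add_right t)))]
  simp

lemma exists_le_isSolution [Finite σ] {A : NFA (Track ι) σ} {m : ι → ℕ} {n b : ℕ}
    (h : IsSolution A m n) (hb : ∀ i, m i ≤ b) :
    ∃ n' ≤ b + Nat.card (Function.End (Set σ)), IsSolution A m n' := by
  have : Finite (Function.End (Set σ)) := inferInstanceAs (Finite (Set σ → Set σ))
  rcases le_total n b with hn | hn
  · exact ⟨n, hn.trans (Nat.le_add_right _ _), h⟩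
  obtain ⟨k, rfl⟩ := Nat.exists_eq_add_of_le hn
  obtain ⟨r, hr, hpow⟩ := exists_lt_card_pow_eq (letterMap A (blankLetter ι)) k
  refine ⟨b + r, by omega, fun i => (hb i).trans (b.le_add_right r), ?_⟩
  have hacc := h.2
  rw [trackWord_add_of_le hb, NFA.mem_accepts, NFA.evalFrom_append, evalFrom_replicate] at hacc ⊢
  rwa [hpow]

/-- From the state `q`, some run performing `X` and then reading blank letters is accepting. -/
def Finishes (A : NFA (Track ι) σ) (X : Function.End (Set σ)) (q : σ) : Prop :=
  ∃ z, List.replicate z (blankLetter ι) ∈ A.acceptsFrom (X {q})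

lemma isSolution_iff_finishes [DecidableEq ι] (A : NFA (Track ι) σ) {m : ι → ℕ} {i : ι} {n : ℕ}
    (hothers : ∀ k ≠ i, m k ≤ n) (hle : n ≤ m i) (hpow : m i < 2 ^ n) :
    (∃ N, IsSolution A m N) ↔ ∃ q ∈ A.evalFrom A.start (trackWord m n),
      Finishes A (letterMap A (soloLetter i) ^ (m i - n)) q := by
  have hmax : ∀ k, m k ≤ m i := fun k => by
    rcases eq_or_ne k i with rfl | hk
    exacts [le_rfl, (hothers k hk).trans hle]
  calc (∃ N, IsSolution A m N) ↔ ∃ z, trackWord m (m i + z) ∈ A.accepts := by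
        constructor
        · rintro ⟨N, hN, hacc⟩
          obtain ⟨z, rfl⟩ := Nat.exists_eq_add_of_le (hN i)
          exact ⟨z, hacc⟩
        · rintro ⟨z, hacc⟩
          exact ⟨_, fun k => (hmax k).trans (Nat.le_add_right _ z), hacc⟩
    _ ↔ ∃ z, ∃ q ∈ A.evalFrom A.start (trackWord m n), List.replicate z (blankLetter ι) ∈
          A.acceptsFrom ((letterMap A (soloLetter i) ^ (m i - n)) {q}) := by
        refine exists_congr fun z => ?_
        rw [trackWord_add_of_le hmax, trackWord_eq_append_solo hothers hle hpow,
          List.append_assoc, NFA.accepts_eq_acceptsFrom_start, NFA.append_mem_acceptsFrom,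
          mem_acceptsFrom_iff_exists_singleton]
        simp only [NFA.append_mem_acceptsFrom, evalFrom_replicate]
    _ ↔ _ := by
        simp only [Finishes]
        tauto

/-- The carry into digit `t` when adding `x` and `y` in binary. -/
def carryBit (x y t : ℕ) : Bool := decide (2 ^ t ≤ x % 2 ^ t + y % 2 ^ t)

lemma carryBit_eq_carry (x y t : ℕ) :
    carryBit x y t = BitVec.carry t (BitVec.ofNat (t + 1) x) (BitVec.ofNat (t + 1) y) false := by
  simp [carryBit, BitVec.carry, Nat.mod_mod_of_dvd _ (pow_dvd_pow 2 t.le_succ)]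

lemma carryBit_succ (x y t : ℕ) :
    carryBit x y (t + 1) = Bool.atLeastTwo (x.testBit t) (y.testBit t) (carryBit x y t) := by
  have h := BitVec.carry_succ t (BitVec.ofNat (t + 1) x) (BitVec.ofNat (t + 1) y) false
  rw [← carryBit_eq_carry] at h
  simpa [BitVec.getLsbD_ofNat, -BitVec.getLsbD_eq_getElem, carryBit, BitVec.carry] using h

lemma testBit_add_eq_xor_carryBit (x y t : ℕ) :
    (x + y).testBit t = (x.testBit t ^^ (y.testBit t ^^ carryBit x y t)) := by
  have h := BitVec.getLsbD_add t.lt_succ_self (BitVec.ofNat (t + 1) x) (BitVec.ofNat (t + 1) y)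
  rw [← carryBit_eq_carry, ← BitVec.ofNat_add] at h
  simpa only [BitVec.getLsbD_ofNat, t.lt_succ_self, decide_true, Bool.true_and] using h

lemma pow_two_pow_succ {G : Type*} [Monoid G] (T : G) (t : ℕ) :
    T ^ 2 ^ (t + 1) = T ^ 2 ^ t * T ^ 2 ^ t := by
  rw [pow_succ 2, mul_two, pow_add]

lemma pow_mod_two_pow_succ {G : Type*} [Monoid G] (T : G) (E t : ℕ) :
    T ^ (E % 2 ^ (t + 1)) = T ^ (E % 2 ^ t) * (T ^ 2 ^ t) ^ (E.testBit t).toNat := by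
  rw [Nat.mod_pow_succ, pow_add, pow_mul, Nat.toNat_testBit]

lemma pow_mod_two_pow_succ_add_mul {G : Type*} [Monoid G] (T : G) (M c t : ℕ) :
    T ^ (M % 2 ^ (t + 1) + c * (t + 1)) =
      T ^ (M % 2 ^ t + c * t) * (T ^ 2 ^ t) ^ (M.testBit t).toNat * T ^ c := by
  rw [← pow_mul, ← pow_add, ← pow_add, Nat.mod_pow_succ, Nat.toNat_testBit]
  congr 1
  ring

variable [DecidableEq ι]

/-- The automaton guessing the digits of a number `E` and running `A` with counter `i` set to
`m j + E`, where `j` is a counter whose value is the length of the word. Besides the carry, the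
monitor keeps the powers `T ^ 2 ^ t` and `T ^ (E % 2 ^ t)` of `T = letterMap A (soloLetter i)`, the
second of which describes in the end the `E` steps during which only counter `i` is incremented. -/
def excessAutomaton (A : NFA (Track ι) σ) (i j : ι) :
    NFA (Track ι) (σ × Bool × Function.End (Set σ) × Function.End (Set σ)) :=
  guessProduct A (fun l => (l j).2 = true)
    (fun x l b => Function.update l i (b ^^ ((l j).1 ^^ x.1), true))
    (fun x l b => (Bool.atLeastTwo b (l j).1 x.1, x.2.1 * x.2.1, x.2.2 * x.2.1 ^ b.toNat))
    (false, letterMap A (soloLetter i), 1)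
    {p | p.2.1 = false ∧ Finishes A p.2.2.2 p.1}

lemma trackWord_mem_accepts_excessAutomaton (A : NFA (Track ι) σ) (i j : ι) (m : ι → ℕ) (n : ℕ)
    (hj : m j ≤ n) :
    trackWord m n ∈ (excessAutomaton A i j).accepts ↔ n = m j ∧ ∃ E < 2 ^ n, m j + E < 2 ^ n ∧
      ∃ q ∈ A.evalFrom A.start (trackWord (Function.update m i (m j + E)) n),
        Finishes A (letterMap A (soloLetter i) ^ E) q := by
  set T := letterMap A (soloLetter i)
  let v (E t : ℕ) := (carryBit E (m j) t, T ^ 2 ^ t, T ^ (E % 2 ^ t))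
  have hword : ∀ E, n = m j → (List.range n).map (fun t => Function.update (trackLetter m t) i
      (E.testBit t ^^ ((trackLetter m t j).1 ^^ (v E t).1), true)) =
        trackWord (Function.update m i (m j + E)) n := by
    rintro E hn
    refine List.map_congr_left fun t ht => ?_
    rw [List.mem_range] at ht
    rw [trackLetter_update m i (by omega), add_comm, testBit_add_eq_xor_carryBit]
    rfl
  have hguard : (∀ t < n, (trackLetter m t j).2 = true) ↔ n = m j := by
    simp only [trackLetter, decide_eq_true_eq]
    exact ⟨fun h => by by_contra hne; exact (h (m j) (by omega)).false, by omega⟩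
  have hcarry : ∀ E < 2 ^ n, (carryBit E (m j) n = false ↔ m j + E < 2 ^ n) := by
    intro E hE
    have hpow : m j < 2 ^ n := hj.trans_lt Nat.lt_two_pow_self
    simp [carryBit, Nat.mod_eq_of_lt hE, Nat.mod_eq_of_lt hpow, add_comm]
  rw [trackWord, excessAutomaton, mem_accepts_guessProduct (v := v)
    (fun E => by simp [v, T, carryBit, Nat.mod_one])
    (fun E t => by simp only [v, carryBit_succ, pow_two_pow_succ, pow_mod_two_pow_succ]; rfl),
    hguard]
  refine and_congr_right fun hn => exists_congr fun E => and_congr_right fun hE => ?_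
  rw [hword E hn, ← hcarry E hE]
  simp only [v, Nat.mod_eq_of_lt hE, Set.mem_ofPred_eq]
  tauto

lemma isSolution_excessAutomaton (A : NFA (Track ι) σ) (i j : ι) (m : ι → ℕ) (n : ℕ) :
    IsSolution (excessAutomaton A i j) m n ↔ (∀ k, m k ≤ n) ∧ n = m j ∧
      ∃ M, n ≤ M ∧ M < 2 ^ n ∧ ∃ N, IsSolution A (Function.update m i M) N := by
  refine and_congr_right fun hm => ?_
  rw [trackWord_mem_accepts_excessAutomaton A i j m n (hm j)]
  refine and_congr_right fun hn => ?_
  have hcut : ∀ E, m j + E < 2 ^ n → ((∃ N, IsSolution A (Function.update m i (m j + E)) N) ↔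
      ∃ q ∈ A.evalFrom A.start (trackWord (Function.update m i (m j + E)) n),
        Finishes A (letterMap A (soloLetter i) ^ E) q) := fun E hE => by
    rw [isSolution_iff_finishes (i := i) A (fun k hk => by simpa [hk] using hm k)
      (by simp [hn]) (by simpa using hE), Function.update_self, hn, Nat.add_sub_cancel_left]
  constructor
  · rintro ⟨E, -, hE, hq⟩
    exact ⟨m j + E, by omega, hE, (hcut E hE).2 hq⟩
  · rintro ⟨M, hle, hM, hN⟩
    obtain ⟨E, rfl⟩ := Nat.exists_eq_add_of_le (hn ▸ hle)
    exact ⟨E, by omega, hM, (hcut E hM).1 hN⟩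

/-- The automaton guessing the digits of a number `M` whose binary size is the length `n` of the
word and running `A` with counter `i` set to `M`. The monitor keeps whether `M % 2 ^ t` has size
`t`, the minimum of `t` and `n₀`, and the powers `T ^ 2 ^ t` and `T ^ (M % 2 ^ t + c * t)` of
`T = letterMap A (soloLetter i)`; for suitable `c` the latter is in the end `T ^ (M - n)`. -/
def sizeAutomaton (A : NFA (Track ι) σ) (i : ι) (n₀ c : ℕ) :
    NFA (Track ι) (σ × Bool × Fin (n₀ + 1) × Function.End (Set σ) × Function.End (Set σ)) :=
  guessProduct A (fun _ => True) (fun _ l b => Function.update l i (b, true))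
    (fun x _ b => (b, ⟨min (x.2.1 + 1) n₀, by omega⟩, x.2.2.1 * x.2.2.1,
      x.2.2.2 * x.2.2.1 ^ b.toNat * letterMap A (soloLetter i) ^ c))
    (true, ⟨0, by omega⟩, letterMap A (soloLetter i), 1)
    {p | p.2.1 = true ∧ p.2.2.1 = n₀ ∧ Finishes A p.2.2.2.2 p.1}

lemma size_mod_two_pow_succ_eq_iff (M t : ℕ) :
    (M % 2 ^ (t + 1)).size = t + 1 ↔ M.testBit t = true := by
  have hlt : M % 2 ^ t < 2 ^ t := Nat.mod_lt _ (by positivity)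
  rw [le_antisymm_iff, Nat.size_le, Nat.succ_le_iff, Nat.lt_size, Nat.mod_pow_succ,
    ← Nat.toNat_testBit, pow_succ]
  cases M.testBit t <;> simp <;> omega

lemma trackWord_mem_accepts_sizeAutomaton (A : NFA (Track ι) σ) (i : ι) (n₀ c : ℕ)
    (m : ι → ℕ) (n : ℕ) :
    trackWord m n ∈ (sizeAutomaton A i n₀ c).accepts ↔ n₀ ≤ n ∧ ∃ M, M.size = n ∧
      ∃ q ∈ A.evalFrom A.start (trackWord (Function.update m i M) n),
        Finishes A (letterMap A (soloLetter i) ^ (M + c * n)) q := by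
  set T := letterMap A (soloLetter i)
  let v (M t : ℕ) : Bool × Fin (n₀ + 1) × Function.End (Set σ) × Function.End (Set σ) :=
    (decide ((M % 2 ^ t).size = t), ⟨min t n₀, by omega⟩, T ^ 2 ^ t, T ^ (M % 2 ^ t + c * t))
  have hword : ∀ M, M.size = n →
      (List.range n).map (fun t => Function.update (trackLetter m t) i (M.testBit t, true)) =
        trackWord (Function.update m i M) n := by
    rintro M rfl
    refine List.map_congr_left fun t ht => ?_
    rw [List.mem_range, Nat.lt_size] at ht
    rw [trackLetter_update m i (Nat.lt_two_pow_self.trans_le ht)]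
  have hsucc : ∀ M t, v M (t + 1) = (M.testBit t, ⟨min ((v M t).2.1 + 1) n₀, by omega⟩,
      (v M t).2.2.1 * (v M t).2.2.1,
      (v M t).2.2.2 * (v M t).2.2.1 ^ (M.testBit t).toNat * T ^ c) := fun M t => by
    refine Prod.ext ?_ (Prod.ext (Fin.ext ?_) (Prod.ext (pow_two_pow_succ T t) ?_))
    · simp [v, size_mod_two_pow_succ_eq_iff]
    · simp only [v]; omega
    · exact pow_mod_two_pow_succ_add_mul T M c t
  have hfinal : ∀ M < 2 ^ n, ∀ q, (q, v M n) ∈ (sizeAutomaton A i n₀ c).accept ↔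
      n₀ ≤ n ∧ M.size = n ∧ Finishes A (T ^ (M + c * n)) q := fun M hM q => by
    simp only [sizeAutomaton, guessProduct, v, Nat.mod_eq_of_lt hM, Set.mem_ofPred_eq,
      decide_eq_true_eq, min_eq_right_iff]
    tauto
  rw [trackWord, sizeAutomaton, mem_accepts_guessProduct (v := v)
    (fun E => by simp [v, T, Nat.mod_one]) hsucc]
  constructor
  · rintro ⟨-, M, hM, q, hq, hF⟩
    obtain ⟨hn, hsize, hfin⟩ := (hfinal M hM q).1 hF
    exact ⟨hn, M, hsize, q, hword M hsize ▸ hq, hfin⟩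
  · rintro ⟨hn, M, hsize, q, hq, hfin⟩
    have hM : M < 2 ^ n := Nat.size_le.1 hsize.le
    exact ⟨fun _ _ => trivial, M, hM, q, (hword M hsize).symm ▸ hq,
      (hfinal M hM q).2 ⟨hn, hsize, hfin⟩⟩

lemma two_mul_le_two_pow_sub_one {n : ℕ} (hn : 4 ≤ n) : 2 * n ≤ 2 ^ (n - 1) := by
  induction n, hn using Nat.le_induction with
  | base => norm_num
  | succ n hn ih =>
    obtain ⟨k, rfl⟩ := Nat.exists_eq_add_of_le' (show 1 ≤ n by omega)
    simp only [Nat.add_sub_cancel, pow_succ] at ih ⊢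
    omega

lemma exists_isSolution_sizeAutomaton [Finite σ] (A : NFA (Track ι) σ) (i : ι) : ∃ c, ∀ m n,
    IsSolution (sizeAutomaton A i (Nat.card (Function.End (Set σ)) + 4) c) m n ↔
      (∀ k, m k ≤ n) ∧ Nat.card (Function.End (Set σ)) + 4 ≤ n ∧
        ∃ M, M.size = n ∧ ∃ N, IsSolution A (Function.update m i M) N := by
  have : Finite (Function.End (Set σ)) := inferInstanceAs (Finite (Set σ → Set σ))
  obtain ⟨c, hc⟩ := exists_pow_sub_eq_pow_add_mul (letterMap A (soloLetter i))
  refine ⟨c, fun m n => and_congr_right fun hm => ?_⟩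
  rw [trackWord_mem_accepts_sizeAutomaton]
  refine and_congr_right fun hn => exists_congr fun M => and_congr_right fun hsize => ?_
  have hpow : 2 ^ (n - 1) ≤ M := Nat.lt_size.1 (by omega)
  have hlarge : 2 * n ≤ 2 ^ (n - 1) := two_mul_le_two_pow_sub_one (by omega)
  rw [isSolution_iff_finishes (i := i) (n := n) A (fun k hk => by simpa [hk] using hm k)
    (by rw [Function.update_self]; omega) (by simpa using Nat.size_le.1 hsize.le),
    Function.update_self, hc M n (by omega)]

end Tracks

/-- The number of transformations of the set of subsets of an `s`-element set. -/
def transformationCount (s : ℕ) : ℕ := (2 ^ s) ^ 2 ^ s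

lemma card_end_set (σ : Type*) [Finite σ] :
    Nat.card (Function.End (Set σ)) = transformationCount (Nat.card σ) := by
  have : Fintype σ := Fintype.ofFinite σ
  classical
  rw [show Nat.card (Function.End (Set σ)) = Nat.card (Set σ → Set σ) from rfl, Nat.card_fun,
    Nat.card_eq_fintype_card (α := Set σ), Fintype.card_set, transformationCount,
    Nat.card_eq_fintype_card]

lemma transformationCount_mono : Monotone transformationCount := fun s t h => by
  have : 2 ^ s ≤ 2 ^ t := Nat.pow_le_pow_right two_pos h
  exact (Nat.pow_le_pow_left this _).trans (Nat.pow_le_pow_right (by positivity) this)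

/-- The number of states of `sizeAutomaton`, which is at least that of `excessAutomaton`, for an
automaton with `s` states. -/
def eliminationCount (s : ℕ) : ℕ :=
  s * (2 * ((transformationCount s + 5) * (transformationCount s * transformationCount s)))

lemma eliminationCount_mono : Monotone eliminationCount := fun s t h => by
  have := transformationCount_mono h
  unfold eliminationCount
  gcongr

lemma le_eliminationCount (s : ℕ) : s ≤ eliminationCount s := by
  have : 0 < transformationCount s := by unfold transformationCount; positivity
  exact Nat.le_mul_of_pos_right s (by positivity)

section Elimination

variable {ι σ σ' : Type*} [DecidableEq ι]

/-- `A'` eliminates counter `i` of `A`: from a solution of `A'` one obtains a solution of `A` by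
changing the value of counter `i` to a number which has at most as many binary digits as the word
has letters. -/
def Eliminates (A' : NFA (Track ι) σ') (A : NFA (Track ι) σ) (i : ι) : Prop :=
  ∀ m n, IsSolution A' m n → ∃ M < 2 ^ n, ∃ N, IsSolution A (Function.update m i M) N

lemma excessAutomaton_eliminates (A : NFA (Track ι) σ) (i j : ι) :
    Eliminates (excessAutomaton A i j) A i := fun m n h =>
  let ⟨_, _, M, _, hM, hN⟩ := (isSolution_excessAutomaton A i j m n).1 h
  ⟨M, hM, hN⟩

lemma IsSolution.excessAutomaton {A : NFA (Track ι) σ} {m : ι → ℕ} {N : ℕ} {i j : ι}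
    (h : IsSolution A m N) (hji : j ≠ i) (hothers : ∀ k ≠ i, m k ≤ m j) (hle : m j ≤ m i)
    (hsize : (m i).size ≤ m j) :
    IsSolution (excessAutomaton A i j) (Function.update m i 0) (m j) := by
  refine (isSolution_excessAutomaton ..).2 ⟨fun k => ?_, by simp [hji], m i, hle,
    Nat.size_le.1 hsize, N, by simpa using h⟩
  rcases eq_or_ne k i with rfl | hk
  · simp
  · simpa [hk] using hothers k hk

lemma exists_sizeAutomaton_eliminates [Finite σ] (A : NFA (Track ι) σ) (i : ι) :
    let n₀ := transformationCount (Nat.card σ) + 4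
    ∃ c, Eliminates (sizeAutomaton A i n₀ c) A i ∧
      ∀ m N, IsSolution A m N → (∀ k ≠ i, m k ≤ (m i).size) → 2 ^ n₀ ≤ m i →
        IsSolution (sizeAutomaton A i n₀ c) (Function.update m i 0) (m i).size := by
  obtain ⟨c, hc⟩ := exists_isSolution_sizeAutomaton A i
  rw [card_end_set] at hc
  refine ⟨c, fun m n h => ?_, fun m N h hothers hlarge => (hc _ _).2
    ⟨fun k => ?_, (Nat.lt_size.2 hlarge).le, m i, rfl, N, by simpa using h⟩⟩
  · obtain ⟨-, -, M, hM, hN⟩ := (hc m n).1 h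
    exact ⟨M, Nat.size_le.1 hM.le, hN⟩
  · rcases eq_or_ne k i with rfl | hk
    · simp
    · simpa [hk] using hothers k hk

end Elimination

/-- The word length of the new solution is the binary size of the eliminated counter `i`, or the
second largest counter `j` if that is larger. -/
lemma exists_automaton_eliminating {ι σ : Type} [DecidableEq ι] [Finite σ] (A : NFA (Track ι) σ)
    {S : Finset ι} {m : ι → ℕ} {N : ℕ} {i : ι} (hsol : IsSolution A m N)
    (hsupp : ∀ k ∉ S, m k = 0) (hmax : ∀ k, m k ≤ m i)
    (hlarge : 2 ^ (transformationCount (Nat.card σ) + 4) ≤ m i) :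
    ∃ (σ' : Type) (_ : Finite σ') (A' : NFA (Track ι) σ'),
      Nat.card σ' ≤ eliminationCount (Nat.card σ) ∧ Eliminates A' A i ∧
        ∃ n, IsSolution A' (Function.update m i 0) n := by
  have hfin : Finite (Function.End (Set σ)) := inferInstanceAs (Finite (Set σ → Set σ))
  by_cases hsmall : ∀ k ≠ i, m k ≤ (m i).size
  · obtain ⟨c, helim, hsize⟩ := exists_sizeAutomaton_eliminates A i
    refine ⟨_, inferInstance, sizeAutomaton A i _ c, ?_, helim, _, hsize m N hsol hsmall hlarge⟩
    simp only [Nat.card_prod, card_end_set, Nat.card_eq_fintype_card (α := Bool),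
      Fintype.card_bool, Nat.card_fin, eliminationCount, le_refl]
  · push Not at hsmall
    obtain ⟨k₀, hk₀, hsize⟩ := hsmall
    have hmem : ∀ k, k ≠ i → m k ≠ 0 → k ∈ S.erase i := fun k hk h0 =>
      Finset.mem_erase.2 ⟨hk, not_imp_comm.1 (hsupp k) h0⟩
    obtain ⟨j, hjS, hj⟩ := (S.erase i).exists_max_image m ⟨k₀, hmem k₀ hk₀ (by omega)⟩
    have hothers : ∀ k ≠ i, m k ≤ m j := fun k hk => by
      rcases eq_or_ne (m k) 0 with h0 | h0
      · simp [h0]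
      · exact hj k (hmem k hk h0)
    refine ⟨_, inferInstance, excessAutomaton A i j, ?_, excessAutomaton_eliminates A i j, _,
      hsol.excessAutomaton (Finset.ne_of_mem_erase hjS) hothers (hmax j)
        (hsize.le.trans (hothers k₀ hk₀))⟩
    simp only [Nat.card_prod, card_end_set, Nat.card_eq_fintype_card (α := Bool),
      Fintype.card_bool, eliminationCount]
    gcongr
    exacts [Nat.le_add_right _ _, Nat.le_mul_self _]

/-- Every automaton with at most `s` states that has a solution in which only `k` given counters
are nonzero has such a solution of length at most `b`. -/
def LengthBound (k s b : ℕ) : Prop :=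
  ∀ (ι σ : Type) [Finite σ] (A : NFA (Track ι) σ) (S : Finset ι), Nat.card σ ≤ s → S.card = k →
    ∀ m n, (∀ i ∉ S, m i = 0) → IsSolution A m n →
      ∃ m', (∀ i ∉ S, m' i = 0) ∧ ∃ n' ≤ b, IsSolution A m' n'

lemma LengthBound.anti_left {k s s' b : ℕ} (h : LengthBound k s b) (hs : s' ≤ s) :
    LengthBound k s' b :=
  fun ι σ _ A S hσ => h ι σ A S (hσ.trans hs)

lemma lengthBound_zero (s : ℕ) : LengthBound 0 s (transformationCount s) := by
  intro ι σ _ A S hσ hS m n hsupp hsol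
  have hm : ∀ i, m i ≤ 0 := fun i => (hsupp i (by simp [Finset.card_eq_zero.1 hS])).le
  obtain ⟨n', hn', hsol'⟩ := exists_le_isSolution hsol hm
  rw [card_end_set, zero_add] at hn'
  exact ⟨m, hsupp, n', hn'.trans (transformationCount_mono hσ), hsol'⟩

/-- The bound for one more counter, when `b` is the bound for the automata produced by the
elimination of a counter from an automaton with at most `s` states. -/
def nextBound (s b : ℕ) : ℕ := 2 ^ (b + transformationCount s + 4) + transformationCount s

lemma LengthBound.succ {k s b : ℕ} (hb : LengthBound k (eliminationCount s) b) :
    LengthBound (k + 1) s (nextBound s b) := by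
  classical
  intro ι σ _ A S hσ hS m N hsupp hsol
  have hcount := transformationCount_mono hσ
  have hshrink : ∀ {m N}, (∀ i ∉ S, m i = 0) → IsSolution A m N →
      (∀ i, m i ≤ 2 ^ (b + transformationCount s + 4)) →
      ∃ m', (∀ i ∉ S, m' i = 0) ∧ ∃ n' ≤ nextBound s b, IsSolution A m' n' := by
    intro m N hsupp hsol hm
    obtain ⟨n', hn', hsol'⟩ := exists_le_isSolution hsol hm
    rw [card_end_set] at hn'
    exact ⟨m, hsupp, n', hn'.trans (Nat.add_le_add_left hcount _), hsol'⟩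
  obtain ⟨i, hiS, hi⟩ := S.exists_max_image m (Finset.card_pos.1 (by omega))
  have hmax : ∀ k, m k ≤ m i := fun k => by
    by_cases hk : k ∈ S
    · exact hi k hk
    · simp [hsupp k hk]
  rcases lt_or_ge (m i) (2 ^ (transformationCount (Nat.card σ) + 4)) with hsmall | hlarge
  · exact hshrink hsupp hsol fun k => (hmax k).trans <| hsmall.le.trans <|
      Nat.pow_le_pow_right two_pos (by omega)
  obtain ⟨σ', _, A', hσ', helim, n, hn⟩ := exists_automaton_eliminating A hsol hsupp hmax hlarge
  obtain ⟨m', hsupp', n', hn', hsol'⟩ := hb ι σ' A' (S.erase i)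
    (hσ'.trans (eliminationCount_mono hσ)) (by rw [Finset.card_erase_of_mem hiS]; omega) _ n
    (fun k hk => by
      rcases eq_or_ne k i with rfl | hki
      · simp
      · simpa [hki] using hsupp k fun hkS => hk (Finset.mem_erase.2 ⟨hki, hkS⟩)) hn
  obtain ⟨M, hM, N', hN'⟩ := helim m' n' hsol'
  have hpow : 2 ^ n' ≤ 2 ^ (b + transformationCount s + 4) :=
    Nat.pow_le_pow_right two_pos (by omega)
  refine hshrink (fun k hk => ?_) hN' fun k => ?_
  · have hki : k ≠ i := fun h => hk (h ▸ hiS)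
    simpa [hki] using hsupp' k fun h => hk (Finset.mem_of_mem_erase h)
  · rcases eq_or_ne k i with rfl | hki
    · simpa using hM.le.trans hpow
    · simpa [hki] using (hsol'.1 k).trans (Nat.lt_two_pow_self.le.trans hpow)

/-- A bound for the length of a shortest solution of a solvable automaton with at most `s` states
and `k` counters. -/
def solutionBound (s k : ℕ) : ℕ :=
  (nextBound (eliminationCount^[k] s))^[k] (transformationCount (eliminationCount^[k] s))

lemma nextBound_mono {s s' b b' : ℕ} (hs : s ≤ s') (hb : b ≤ b') :
    nextBound s b ≤ nextBound s' b' := by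
  have := transformationCount_mono hs
  unfold nextBound
  gcongr
  exact one_le_two

lemma LengthBound.mono_right {k s b b' : ℕ} (h : LengthBound k s b) (hb : b ≤ b') :
    LengthBound k s b' := fun ι σ _ A S hσ hS m n hsupp hsol =>
  let ⟨m', hsupp', n', hn', hsol'⟩ := h ι σ A S hσ hS m n hsupp hsol
  ⟨m', hsupp', n', hn'.trans hb, hsol'⟩

lemma lengthBound_solutionBound (s k : ℕ) : LengthBound k s (solutionBound s k) := by
  suffices ∀ s₁, eliminationCount^[k] s ≤ s₁ →
      LengthBound k s ((nextBound s₁)^[k] (transformationCount s₁)) from this _ le_rfl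
  induction k generalizing s with
  | zero => exact fun s₁ hs => (lengthBound_zero s₁).anti_left hs
  | succ k ih =>
    intro s₁ hs₁
    rw [Function.iterate_succ_apply']
    refine (ih _ s₁ hs₁).succ.mono_right (nextBound_mono (le_trans ?_ hs₁) le_rfl)
    exact Function.id_le_iterate_of_id_le le_eliminationCount (k + 1) s

lemma toNat_injective : Function.Injective Bool.toNat := by decide

lemma sub_eq_sub_succ_add_toNat (M t : ℕ) : M - t = M - (t + 1) + (decide (t < M)).toNat := by
  by_cases h : t < M <;> simp only [h, decide_true, decide_false, Bool.toNat_true,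
    Bool.toNat_false] <;> omega

lemma div_two_pow_eq_two_mul_add_testBit (M t : ℕ) :
    M / 2 ^ t = 2 * (M / 2 ^ (t + 1)) + (M.testBit t).toNat := by
  rw [Nat.toNat_testBit, pow_succ, ← Nat.div_div_eq_div_mul]
  omega

lemma eq_sub_of_increments_persist {x : ℕ → ℕ} {n : ℕ} (hzero : x 0 = 0)
    (hstep : ∀ k < n, x (k + 1) = x k ∨ x (k + 1) = x k + 1)
    (hpersist : ∀ j k, j ≤ k → k < n → x (j + 1) = x j + 1 → x (k + 1) = x k + 1)
    {t : ℕ} (ht : t ≤ n) : x (n - t) = x n - t := by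
  have hdichotomy : ∀ k ≤ n, x k = 0 ∨ ∀ j, k ≤ j → j < n → x (j + 1) = x j + 1 := by
    intro k hk
    induction k with
    | zero => exact .inl hzero
    | succ k ih =>
      rcases ih (by omega) with hk0 | hforever
      · rcases hstep k hk with hstay | hinc
        · exact .inl (hstay.trans hk0)
        · exact .inr fun j hkj hj => hpersist k j (by omega) hj hinc
      · exact .inr fun j hkj hj => hforever j (by omega) hj
  induction t with
  | zero => rfl
  | succ t ih =>
    obtain ⟨k, hk⟩ : ∃ k, n - t = k + 1 := ⟨n - t - 1, by omega⟩
    have hprev := ih (by omega)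
    rw [hk] at hprev
    rw [show n - (t + 1) = k by omega]
    rcases hdichotomy k (by omega) with hk0 | hforever
    · have := hstep k (by omega)
      omega
    · have := hforever k le_rfl (by omega)
      omega

lemma exists_computable_decide_encode {α : Type*} [Primcodable α] {p : α → Prop}
    (hp : PrimrecPred p) :
    ∃ g : ℕ → Bool, Computable g ∧ ∀ a, g (Encodable.encode a) = true ↔ p a := by
  obtain ⟨_, hp⟩ := hp
  have hg : Primrec fun e : ℕ => ((Encodable.decode e).map fun a => decide (p a)).getD false :=
    Primrec.option_getD.comp (Primrec.option_map .decode (hp.comp .snd).to₂) (.const false)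
  exact ⟨_, hg.to_comp, fun a => by simp [Encodable.encodek]⟩

section Primrec

open Primrec

lemma primrec₂_pow : Primrec₂ fun m n : ℕ => m ^ n := Primrec₂.unpaired'.1 Nat.Primrec.pow

lemma primrec_transformationCount : Primrec transformationCount := by
  have htwo : Primrec fun s : ℕ => 2 ^ s := primrec₂_pow.comp (const 2) .id
  exact primrec₂_pow.comp htwo htwo

lemma primrec_eliminationCount : Primrec eliminationCount := by
  have hcount := primrec_transformationCount
  exact nat_mul.comp .id <| nat_mul.comp (const 2) <|
    nat_mul.comp (nat_add.comp hcount (const 5)) (nat_mul.comp hcount hcount)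

lemma primrec₂_nextBound : Primrec₂ nextBound := by
  have hcount : Primrec fun p : ℕ × ℕ => transformationCount p.1 :=
    primrec_transformationCount.comp fst
  exact nat_add.comp
    (primrec₂_pow.comp (const 2) (nat_add.comp (nat_add.comp snd hcount) (const 4))) hcount

lemma primrec₂_solutionBound : Primrec₂ solutionBound := by
  have hsize : Primrec fun p : ℕ × ℕ => eliminationCount^[p.2] p.1 :=
    nat_iterate snd fst (primrec_eliminationCount.comp₂ .right)
  exact nat_iterate snd (primrec_transformationCount.comp hsize)
    (primrec₂_nextBound.comp (hsize.comp fst) snd).to₂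

end Primrec

namespace RawVASS

/-- The counter `x_i` of a configuration. -/
abbrev xCounter (c : RawConfig) (i : ℕ) : ℕ := c.2.getD (2 * i) 0

/-- The counter `y_i` of a configuration. -/
abbrev yCounter (c : RawConfig) (i : ℕ) : ℕ := c.2.getD (2 * i + 1) 0

variable (V : RawVASS)

/-- One step of the configuration graph, reading any letter of the alphabet. -/
def Step (c c' : RawConfig) : Prop := ∃ a < V.alpha, V.StepR c a c'

/-- Reachability in exactly `n` steps. -/
def ReachesIn (n : ℕ) (c c' : RawConfig) : Prop :=
  ∃ w : List ℕ, w.length = n ∧ (∀ a ∈ w, a < V.alpha) ∧ V.ReachR c w c'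

/-- The acceptance condition on the last configuration of a run. -/
def IsAccepting (c : RawConfig) : Prop :=
  c.1 ∈ V.finals ∧ ∀ i < V.pairs, xCounter c i = yCounter c i

variable {V}

lemma exists_mem_lang_iff :
    (∃ w, w ∈ V.Lang) ↔ ∃ n c, V.ReachesIn n V.initConfig c ∧ V.IsAccepting c :=
  ⟨fun ⟨w, ha, c, hr, hc⟩ => ⟨w.length, c, ⟨w, rfl, ha, hr⟩, hc⟩,
    fun ⟨_, c, ⟨w, _, ha, hr⟩, hc⟩ => ⟨w, ha, c, hr, hc⟩⟩

lemma reachesIn_zero {c c' : RawConfig} : V.ReachesIn 0 c c' ↔ c = c' := by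
  simp [ReachesIn, ReachR]

lemma reachesIn_succ {n : ℕ} {c c' : RawConfig} :
    V.ReachesIn (n + 1) c c' ↔ ∃ c₁, V.Step c c₁ ∧ V.ReachesIn n c₁ c' := by
  constructor
  · rintro ⟨_ | ⟨a, w⟩, hlen, ha, hr⟩
    · simp at hlen
    obtain ⟨c₁, hstep, hr⟩ := hr
    rw [List.forall_mem_cons] at ha
    exact ⟨c₁, ⟨a, ha.1, hstep⟩, w, by simpa using hlen, ha.2, hr⟩
  · rintro ⟨c₁, ⟨a, ha, hstep⟩, w, hlen, hw, hr⟩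
    exact ⟨a :: w, by simp [hlen], List.forall_mem_cons.2 ⟨ha, hw⟩, c₁, hstep, hr⟩

lemma ReachesIn.exists_seq {n : ℕ} {c c' : RawConfig} (h : V.ReachesIn n c c') :
    ∃ cs : ℕ → RawConfig, cs 0 = c ∧ cs n = c' ∧ ∀ k < n, V.Step (cs k) (cs (k + 1)) := by
  induction n generalizing c with
  | zero => exact ⟨fun _ => c, rfl, reachesIn_zero.1 h, by simp⟩
  | succ n ih =>
    obtain ⟨c₁, hstep, hr⟩ := reachesIn_succ.1 h
    obtain ⟨cs, hfirst, hlast, hsteps⟩ := ih hr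
    refine ⟨fun k => Nat.casesOn k c cs, rfl, hlast, fun k hk => ?_⟩
    cases k with
    | zero => exact show V.Step c (cs 0) from hfirst.symm ▸ hstep
    | succ k => exact hsteps k (by omega)

lemma Step.length_eq {c c' : RawConfig} (h : V.Step c c') : c'.2.length = c.2.length :=
  let ⟨_, _, _, _, hlen, _⟩ := h
  hlen

variable (V) in
/-- A transition from `q` to `q'` whose increments are the flags and whose added digits are the
binary digits of the letter `l`. -/
def LetterStep (l : Track (Fin V.pairs)) (q q' : ℕ) : Prop :=
  ∃ a < V.alpha, ∃ u : List (ℤ × ℤ), (q, a, q', u) ∈ V.trans ∧ ∀ i : Fin V.pairs,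
    u.getD (2 * i) (1, 0) = (1, ((l i).2.toNat : ℤ)) ∧
      u.getD (2 * i + 1) (1, 0) = (2, ((l i).1.toNat : ℤ))

lemma LetterStep.step {l : Track (Fin V.pairs)} {c c' : RawConfig} (h : V.LetterStep l c.1 c'.1)
    (hc : c.2.length = 2 * V.pairs) (hc' : c'.2.length = 2 * V.pairs)
    (hx : ∀ i : Fin V.pairs, xCounter c' i = xCounter c i + (l i).2.toNat)
    (hy : ∀ i : Fin V.pairs, yCounter c' i = 2 * yCounter c i + (l i).1.toNat) :
    V.Step c c' := by
  obtain ⟨a, ha, u, hu, hul⟩ := h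
  refine ⟨a, ha, u, hu, hc'.trans hc.symm, fun j hj => ?_⟩
  rcases Nat.even_or_odd' j with ⟨i, rfl | rfl⟩
  · have hi : i < V.pairs := by omega
    have := hx ⟨i, hi⟩
    rw [(hul ⟨i, hi⟩).1]
    push_cast [this]
    ring
  · have hi : i < V.pairs := by omega
    have := hy ⟨i, hi⟩
    rw [(hul ⟨i, hi⟩).2]
    push_cast [this]
    ring

lemma Step.exists_letterStep (hV : V.Restricted) {c c' : RawConfig} (h : V.Step c c')
    (hc : c.2.length = 2 * V.pairs) : ∃ l : Track (Fin V.pairs), V.LetterStep l c.1 c'.1 ∧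
      (∀ i : Fin V.pairs, xCounter c' i = xCounter c i + (l i).2.toNat) ∧
      ∀ i : Fin V.pairs, yCounter c' i = 2 * yCounter c i + (l i).1.toNat := by
  obtain ⟨a, ha, u, hu, -, hval⟩ := h
  have hbit : ∀ {p : ℤ × ℤ} {s : ℤ}, p = (s, 0) ∨ p = (s, 1) → ∃ b : Bool, p = (s, (b.toNat : ℤ)) :=
    fun h => h.elim (fun h => ⟨false, h⟩) fun h => ⟨true, h⟩
  choose incr hincr using fun i : Fin V.pairs => hbit ((hV.1 _ hu).2 i i.2).1
  choose digit hdigit using fun i : Fin V.pairs => hbit ((hV.1 _ hu).2 i i.2).2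
  refine ⟨fun i => (digit i, incr i), ⟨a, ha, u, hu, fun i => ⟨hincr i, hdigit i⟩⟩,
    fun i => ?_, fun i => ?_⟩
  · have hx := hval (2 * i) (by omega)
    simp only [hincr] at hx
    simp only [xCounter]
    omega
  · have hy := hval (2 * i + 1) (by omega)
    simp only [hdigit] at hy
    simp only [yCounter]
    omega

lemma Step.letterStep (hV : V.Restricted) {l : Track (Fin V.pairs)} {c c' : RawConfig}
    (h : V.Step c c') (hc : c.2.length = 2 * V.pairs)
    (hx : ∀ i : Fin V.pairs, xCounter c' i = xCounter c i + (l i).2.toNat)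
    (hy : ∀ i : Fin V.pairs, yCounter c' i = 2 * yCounter c i + (l i).1.toNat) :
    V.LetterStep l c.1 c'.1 := by
  obtain ⟨l', hl', hx', hy'⟩ := h.exists_letterStep hV hc
  suffices l = l' from this ▸ hl'
  exact funext fun i => Prod.ext (toNat_injective (by have := hy i; have := hy' i; omega))
    (toNat_injective (by have := hx i; have := hx' i; omega))

variable (V) in
/-- The control states that a run from the initial configuration can visit. -/
def visitedStates : Finset ℕ := (V.init :: V.trans.map fun t => t.2.2.1).toFinset

lemma card_visitedStates_le : Nat.card V.visitedStates ≤ V.trans.length + 1 := by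
  rw [Nat.card_eq_fintype_card, Fintype.card_coe]
  exact (List.toFinset_card_le _).trans (by simp)

lemma init_mem_visitedStates : V.init ∈ V.visitedStates := by simp [visitedStates]

lemma Step.mem_visitedStates {c c' : RawConfig} (h : V.Step c c') : c'.1 ∈ V.visitedStates := by
  obtain ⟨a, -, u, hu, -⟩ := h
  exact List.mem_toFinset.2 (List.mem_cons_of_mem _ (List.mem_map.2 ⟨_, hu, rfl⟩))

variable (V) in
/-- The automaton reading runs of `V` backwards, from a final state to the initial one. -/
def runAutomaton : NFA (Track (Fin V.pairs)) V.visitedStates where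
  step q l := {q' | V.LetterStep l q' q}
  start := {q | q.1 ∈ V.finals}
  accept := {q | q.1 = V.init}

lemma mem_eval_runAutomaton_succ {m : Fin V.pairs → ℕ} {t : ℕ} {q : V.visitedStates} :
    q ∈ V.runAutomaton.eval (trackWord m (t + 1)) ↔
      ∃ q' ∈ V.runAutomaton.eval (trackWord m t), V.LetterStep (trackLetter m t) q q' := by
  rw [trackWord, List.range_succ, List.map_append, List.map_singleton, NFA.eval_append_singleton,
    NFA.mem_stepSet]
  rfl

/-- The configuration `t` steps before the end of an accepting run with final counter values `m`. -/
def backwardConfig {p : ℕ} (q : ℕ) (m : Fin p → ℕ) (t : ℕ) : RawConfig :=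
  (q, List.ofFn fun j : Fin (2 * p) =>
    if j.1 % 2 = 0 then m ⟨j / 2, by omega⟩ - t else m ⟨j / 2, by omega⟩ / 2 ^ t)

section BackwardConfig

variable {p : ℕ} (q : ℕ) (m : Fin p → ℕ) (t : ℕ)

lemma length_backwardConfig : (backwardConfig q m t).2.length = 2 * p := by simp [backwardConfig]

lemma xCounter_backwardConfig (i : Fin p) : xCounter (backwardConfig q m t) i = m i - t := by
  rw [xCounter, List.getD_eq_getElem _ _ (by rw [length_backwardConfig]; omega)]
  simp [backwardConfig]

lemma yCounter_backwardConfig (i : Fin p) : yCounter (backwardConfig q m t) i = m i / 2 ^ t := by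
  rw [yCounter, List.getD_eq_getElem _ _ (by rw [length_backwardConfig]; omega)]
  have : (2 * i.1 + 1) / 2 = i := by omega
  simp [backwardConfig, this, Nat.add_mod]

variable {m t} in
lemma backwardConfig_of_le (h : ∀ i, m i ≤ t) :
    backwardConfig q m t = (q, List.replicate (2 * p) 0) := by
  refine Prod.ext rfl (List.eq_replicate_iff.2 ⟨length_backwardConfig q m t, fun b hb => ?_⟩)
  obtain ⟨j, rfl⟩ := List.mem_ofFn.1 hb
  split_ifs
  · exact Nat.sub_eq_zero_of_le (h _)
  · exact Nat.div_eq_of_lt ((h _).trans_lt Nat.lt_two_pow_self)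

end BackwardConfig

lemma exists_reachesIn_of_mem_eval {m : Fin V.pairs → ℕ} {t : ℕ} {q : V.visitedStates}
    (hq : q ∈ V.runAutomaton.eval (trackWord m t)) :
    ∃ c, V.ReachesIn t (backwardConfig q m t) c ∧ V.IsAccepting c := by
  induction t generalizing q with
  | zero =>
    refine ⟨_, reachesIn_zero.2 rfl, hq, fun i hi => ?_⟩
    have hx := xCounter_backwardConfig q m 0 ⟨i, hi⟩
    have hy := yCounter_backwardConfig q m 0 ⟨i, hi⟩
    simpa using hx.trans (by simpa using hy.symm)
  | succ t ih =>
    obtain ⟨q', hq', hstep⟩ := mem_eval_runAutomaton_succ.1 hq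
    obtain ⟨c, hreach, hc⟩ := ih hq'
    refine ⟨c, reachesIn_succ.2 ⟨_, ?_, hreach⟩, hc⟩
    refine LetterStep.step (l := trackLetter m t) hstep (length_backwardConfig ..)
      (length_backwardConfig ..) (fun i => ?_) fun i => ?_
    · simp only [xCounter_backwardConfig]
      exact sub_eq_sub_succ_add_toNat (m i) t
    · simp only [yCounter_backwardConfig]
      exact div_two_pow_eq_two_mul_add_testBit (m i) t

lemma exists_reachesIn_of_isSolution {m : Fin V.pairs → ℕ} {n : ℕ}
    (h : IsSolution V.runAutomaton m n) :
    ∃ c, V.ReachesIn n V.initConfig c ∧ V.IsAccepting c := by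
  obtain ⟨hm, q, hinit, hq⟩ := h
  have hstart : backwardConfig q m n = V.initConfig := by
    rw [backwardConfig_of_le _ hm, initConfig, show q.1 = V.init from hinit]
  exact hstart ▸ exists_reachesIn_of_mem_eval hq

variable (V) in
/-- The sequence `cs` starts with a run of length `n` from the initial configuration. -/
structure IsInitialRun (n : ℕ) (cs : ℕ → RawConfig) : Prop where
  zero : cs 0 = V.initConfig
  step : ∀ k < n, V.Step (cs k) (cs (k + 1))

namespace IsInitialRun

variable {n : ℕ} {cs : ℕ → RawConfig}

lemma length_eq (h : V.IsInitialRun n cs) {k : ℕ} (hk : k ≤ n) :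
    (cs k).2.length = 2 * V.pairs := by
  induction k with
  | zero => simp [h.zero, initConfig]
  | succ k ih => rw [(h.step k hk).length_eq, ih (by omega)]

lemma xCounter_zero (h : V.IsInitialRun n cs) (i : Fin V.pairs) : xCounter (cs 0) i = 0 := by
  simp [h.zero, initConfig]

lemma mem_visitedStates (h : V.IsInitialRun n cs) {k : ℕ} (hk : k ≤ n) :
    (cs k).1 ∈ V.visitedStates := by
  cases k with
  | zero => rw [h.zero]; exact init_mem_visitedStates
  | succ k => exact (h.step k hk).mem_visitedStates

lemma isRunFromInit (h : V.IsInitialRun n cs) :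
    V.IsRunFromInit ((List.range (n + 1)).map cs) := by
  refine ⟨by simp [List.range_succ_eq_map, h.zero], List.isChain_iff_getElem.2 fun k hk => ?_⟩
  obtain ⟨a, -, hstep⟩ := h.step k (by simpa using hk)
  exact ⟨a, by simpa using hstep⟩

lemma xCounter_increment (hV : V.Restricted) (h : V.IsInitialRun n cs) {i j k : ℕ}
    (hi : i < V.pairs) (hjk : j ≤ k) (hk : k < n)
    (hj : xCounter (cs (j + 1)) i = xCounter (cs j) i + 1) :
    xCounter (cs (k + 1)) i = xCounter (cs k) i + 1 := by
  have hget : ∀ k ≤ n, ((List.range (n + 1)).map cs).getD k default = cs k := fun k hk => by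
    rw [List.getD_eq_getElem _ _ (by simpa using Nat.lt_succ_of_le hk)]
    simp
  have := hV.2 _ h.isRunFromInit i hi j (by simp; omega)
  rw [hget _ (by omega), hget _ (by omega)] at this
  simpa only [hget _ hk.le, hget (k + 1) hk] using this hj k hjk (by simpa using hk)

lemma xCounter_eq (hV : V.Restricted) (h : V.IsInitialRun n cs) (i : Fin V.pairs) {t : ℕ}
    (ht : t ≤ n) : xCounter (cs (n - t)) i = xCounter (cs n) i - t := by
  refine eq_sub_of_increments_persist (x := fun k => xCounter (cs k) i) ?_ (fun k hk => ?_)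
    (fun j k hjk hk => h.xCounter_increment hV i.2 hjk hk) ht
  · exact h.xCounter_zero i
  · obtain ⟨l, -, hx, -⟩ := (h.step k hk).exists_letterStep hV (h.length_eq hk.le)
    have := hx i
    have := (l i).2.toNat_le
    omega

lemma yCounter_eq (hV : V.Restricted) (h : V.IsInitialRun n cs) (i : Fin V.pairs) {t : ℕ}
    (ht : t ≤ n) : yCounter (cs (n - t)) i = yCounter (cs n) i / 2 ^ t := by
  induction t with
  | zero => simp
  | succ t ih =>
    obtain ⟨l, -, -, hy⟩ := (h.step (n - (t + 1)) (by omega)).exists_letterStep hV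
      (h.length_eq (by omega))
    have hdouble := hy i
    rw [show n - (t + 1) + 1 = n - t by omega, ih (by omega)] at hdouble
    rw [pow_succ, ← Nat.div_div_eq_div_mul, hdouble]
    have := (l i).1.toNat_le
    omega

lemma letterStep (hV : V.Restricted) (h : V.IsInitialRun n cs) (hacc : V.IsAccepting (cs n))
    {t : ℕ} (ht : t < n) :
    V.LetterStep (trackLetter (fun i => xCounter (cs n) i) t)
      (cs (n - (t + 1))).1 (cs (n - t)).1 := by
  have hstep := h.step (n - (t + 1)) (by omega)
  rw [show n - (t + 1) + 1 = n - t by omega] at hstep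
  refine hstep.letterStep hV (h.length_eq (by omega)) (fun i => ?_) fun i => ?_
  · rw [h.xCounter_eq hV i ht.le, h.xCounter_eq hV i ht]
    exact sub_eq_sub_succ_add_toNat ..
  · rw [h.yCounter_eq hV i ht.le, h.yCounter_eq hV i ht, ← hacc.2 i i.2]
    exact div_two_pow_eq_two_mul_add_testBit ..

lemma mem_eval (hV : V.Restricted) (h : V.IsInitialRun n cs) (hacc : V.IsAccepting (cs n))
    {t : ℕ} (ht : t ≤ n) :
    (⟨(cs (n - t)).1, h.mem_visitedStates (by omega)⟩ : V.visitedStates) ∈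
      V.runAutomaton.eval (trackWord (fun i => xCounter (cs n) i) t) := by
  induction t with
  | zero => exact hacc.1
  | succ t ih => exact mem_eval_runAutomaton_succ.2 ⟨_, ih (by omega), h.letterStep hV hacc ht⟩

lemma isSolution (hV : V.Restricted) (h : V.IsInitialRun n cs) (hacc : V.IsAccepting (cs n)) :
    IsSolution V.runAutomaton (fun i => xCounter (cs n) i) n := by
  refine ⟨fun i => ?_, _, ?_, h.mem_eval hV hacc le_rfl⟩
  · have hstart := h.xCounter_eq hV i le_rfl
    rw [Nat.sub_self, h.xCounter_zero] at hstart
    exact Nat.sub_eq_zero_iff_le.1 hstart.symm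
  · change (cs (n - n)).1 = V.init
    rw [Nat.sub_self, h.zero, initConfig]

end IsInitialRun

lemma ReachesIn.exists_isSolution (hV : V.Restricted) {n : ℕ} {c : RawConfig}
    (h : V.ReachesIn n V.initConfig c) (hc : V.IsAccepting c) :
    ∃ m, IsSolution V.runAutomaton m n := by
  obtain ⟨cs, hzero, rfl, hstep⟩ := h.exists_seq
  exact ⟨_, IsInitialRun.isSolution hV ⟨hzero, hstep⟩ hc⟩

variable (V) in
/-- An upper bound on the length of a shortest accepted word. -/
def runBound : ℕ := solutionBound (V.trans.length + 1) V.pairs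

lemma exists_mem_lang_iff_le_runBound (hV : V.Restricted) :
    (∃ w, w ∈ V.Lang) ↔
      ∃ n ≤ V.runBound, ∃ c, V.ReachesIn n V.initConfig c ∧ V.IsAccepting c := by
  rw [exists_mem_lang_iff]
  refine ⟨fun ⟨n, c, hreach, hc⟩ => ?_, fun ⟨n, _, h⟩ => ⟨n, h⟩⟩
  obtain ⟨m, hsol⟩ := hreach.exists_isSolution hV hc
  obtain ⟨m', -, n', hn', hsol'⟩ := lengthBound_solutionBound _ V.pairs _ _ V.runAutomaton
    Finset.univ card_visitedStates_le (Finset.card_fin _) m n (by simp) hsol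
  exact ⟨n', hn', exists_reachesIn_of_isSolution hsol'⟩

/-- The affine update with coefficients `u`, provided that it is one of the four updates allowed in
a restricted laVASS. This avoids integer arithmetic in the decision procedure. -/
def applyUpdate (u : ℤ × ℤ) (x : ℕ) : ℕ := (if u.1 = 2 then 2 * x else x) + if u.2 = 1 then 1 else 0

/-- The counter values after the updates `u`. -/
def applyUpdates (u : List (ℤ × ℤ)) (v : List ℕ) : List ℕ :=
  (List.range v.length).map fun j => applyUpdate (u.getD j (1, 0)) (v.getD j 0)

variable (V) in
/-- The list of configurations reachable from `c` in one step. -/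
def successors (c : RawConfig) : List RawConfig :=
  V.trans.filterMap fun t =>
    if t.1 = c.1 ∧ t.2.1 < V.alpha then some (t.2.2.1, applyUpdates t.2.2.2 c.2) else none

variable (V) in
/-- The list of configurations reachable in exactly `n` steps from one of the list `l`. -/
def reachList (l : List RawConfig) (n : ℕ) : List RawConfig :=
  (fun l => l.flatMap V.successors)^[n] l

lemma getD_applyUpdates {u : List (ℤ × ℤ)} {v : List ℕ} {j : ℕ} (hj : j < v.length) :
    (applyUpdates u v).getD j 0 = applyUpdate (u.getD j (1, 0)) (v.getD j 0) := by
  rw [List.getD_eq_getElem _ _ (by simpa [applyUpdates] using hj)]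
  simp [applyUpdates]

lemma eq_applyUpdates_iff {u : List (ℤ × ℤ)} {v v' : List ℕ}
    (hu : ∀ j < v.length, u.getD j (1, 0) ∈ ({(1, 0), (1, 1), (2, 0), (2, 1)} : Set (ℤ × ℤ))) :
    v' = applyUpdates u v ↔ v'.length = v.length ∧ ∀ j < v.length,
      (v'.getD j 0 : ℤ) = (u.getD j (1, 0)).1 * (v.getD j 0 : ℤ) + (u.getD j (1, 0)).2 := by
  have hvalue : ∀ j < v.length, (((applyUpdates u v).getD j 0 : ℕ) : ℤ) =
      (u.getD j (1, 0)).1 * (v.getD j 0 : ℤ) + (u.getD j (1, 0)).2 := fun j hj => by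
    rw [getD_applyUpdates hj]
    rcases hu j hj with h | h | h | h <;> rw [h] <;> simp [applyUpdate]
  have hlength : (applyUpdates u v).length = v.length := by simp [applyUpdates]
  refine ⟨fun h => h ▸ ⟨hlength, hvalue⟩, fun ⟨hlen, hval⟩ => ?_⟩
  refine List.ext_getElem (hlen.trans hlength.symm) fun j hj hj' => ?_
  have heq := (hval j (hlen ▸ hj)).trans (hvalue j (hlen ▸ hj)).symm
  rw [List.getD_eq_getElem _ _ hj, List.getD_eq_getElem _ _ hj'] at heq
  exact_mod_cast heq

lemma Restricted.getD_update_mem (hV : V.Restricted) {q a q' : ℕ} {u : List (ℤ × ℤ)}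
    (hu : (q, a, q', u) ∈ V.trans) {j : ℕ} (hj : j < 2 * V.pairs) :
    u.getD j (1, 0) ∈ ({(1, 0), (1, 1), (2, 0), (2, 1)} : Set (ℤ × ℤ)) := by
  rcases Nat.even_or_odd' j with ⟨i, rfl | rfl⟩
  · exact ((hV.1 _ hu).2 i (by omega)).1.elim .inl fun h => .inr (.inl h)
  · exact .inr (.inr ((hV.1 _ hu).2 i (by omega)).2)

lemma mem_successors (hV : V.Restricted) {c c' : RawConfig} (hc : c.2.length = 2 * V.pairs) :
    c' ∈ V.successors c ↔ V.Step c c' := by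
  have hupdate : ∀ {a u}, (c.1, a, c'.1, u) ∈ V.trans → (c'.2 = applyUpdates u c.2 ↔ _) :=
    fun hu => eq_applyUpdates_iff fun j hj => hV.getD_update_mem hu (hc ▸ hj)
  simp only [successors, List.mem_filterMap, Option.ite_none_right_eq_some, Option.some.injEq]
  constructor
  · rintro ⟨⟨_, a, _, u⟩, hu, ⟨rfl, ha⟩, rfl⟩
    exact ⟨a, ha, u, hu, (hupdate hu).1 rfl⟩
  · rintro ⟨a, ha, u, hu, h⟩
    exact ⟨_, hu, ⟨rfl, ha⟩, Prod.ext rfl ((hupdate hu).2 h).symm⟩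

lemma mem_reachList (hV : V.Restricted) {l : List RawConfig}
    (hl : ∀ c ∈ l, c.2.length = 2 * V.pairs) {n : ℕ} {c' : RawConfig} :
    c' ∈ V.reachList l n ↔ ∃ c ∈ l, V.ReachesIn n c c' := by
  induction n generalizing l with
  | zero => simp [reachList, reachesIn_zero]
  | succ n ih =>
    have hstep : ∀ c, c ∈ l.flatMap V.successors ↔ ∃ c₀ ∈ l, V.Step c₀ c := fun c => by
      rw [List.mem_flatMap]
      exact exists_congr fun c₀ => and_congr_right fun hc₀ => mem_successors hV (hl c₀ hc₀)
    have hlength : ∀ c ∈ l.flatMap V.successors, c.2.length = 2 * V.pairs := fun c hc =>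
      let ⟨c₀, hc₀, h⟩ := (hstep c).1 hc
      h.length_eq.trans (hl c₀ hc₀)
    rw [reachList, Function.iterate_succ_apply, ← reachList, ih hlength]
    simp only [hstep, reachesIn_succ]
    exact ⟨fun ⟨c, ⟨c₀, hc₀, h⟩, hr⟩ => ⟨c₀, hc₀, c, h, hr⟩,
      fun ⟨c₀, hc₀, c, h, hr⟩ => ⟨c, ⟨c₀, hc₀, h⟩, hr⟩⟩

variable (V) in
/-- The configurations reachable from the initial one in at most `runBound` steps. -/
def candidates : List RawConfig :=
  (List.range (V.runBound + 1)).flatMap (V.reachList [V.initConfig])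

variable (V) in
/-- The outcome of the search for an accepting run of length at most `runBound`. -/
def SearchSucceeds : Prop := ∃ c ∈ V.candidates, V.IsAccepting c

lemma searchSucceeds_iff (hV : V.Restricted) : V.SearchSucceeds ↔ ∃ w, w ∈ V.Lang := by
  have hinit : ∀ c ∈ [V.initConfig], c.2.length = 2 * V.pairs := by simp [initConfig]
  rw [exists_mem_lang_iff_le_runBound hV]
  simp only [SearchSucceeds, candidates, List.mem_flatMap, List.mem_range, Nat.lt_succ_iff,
    mem_reachList hV hinit, List.mem_singleton, exists_eq_left]
  exact ⟨fun ⟨c, ⟨n, hn, hreach⟩, hc⟩ => ⟨n, hn, c, hreach, hc⟩,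
    fun ⟨n, hn, c, hreach, hc⟩ => ⟨c, ⟨n, hn, hreach⟩, hc⟩⟩

section Primrec

open Primrec

/-- The tuple of components whose code is `RawVASS.enc`. -/
def equivTuple :
    RawVASS ≃ ℕ × ℕ × ℕ × List (ℕ × ℕ × ℕ × List (ℤ × ℤ)) × ℕ × List ℕ where
  toFun V := (V.states, V.pairs, V.alpha, V.trans, V.init, V.finals)
  invFun D := ⟨D.1, D.2.1, D.2.2.1, D.2.2.2.1, D.2.2.2.2.1, D.2.2.2.2.2⟩

instance : Primcodable RawVASS := .ofEquiv _ equivTuple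

lemma primrec_equivTuple : Primrec equivTuple := of_equiv

lemma primrec_pairs : Primrec pairs :=
  (fst.comp (snd.comp primrec_equivTuple)).of_eq fun _ => rfl

lemma primrec_alpha : Primrec alpha :=
  (fst.comp (snd.comp (snd.comp primrec_equivTuple))).of_eq fun _ => rfl

lemma primrec_trans : Primrec trans :=
  (fst.comp (snd.comp (snd.comp (snd.comp primrec_equivTuple)))).of_eq fun _ => rfl

lemma primrec_init : Primrec init :=
  (fst.comp (snd.comp (snd.comp (snd.comp (snd.comp primrec_equivTuple))))).of_eq fun _ => rfl

lemma primrec_finals : Primrec finals :=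
  (snd.comp (snd.comp (snd.comp (snd.comp (snd.comp primrec_equivTuple))))).of_eq fun _ => rfl

lemma primrec_runBound : Primrec runBound :=
  primrec₂_solutionBound.comp (succ.comp (list_length.comp primrec_trans)) primrec_pairs

lemma primrec_initConfig : Primrec initConfig :=
  (pair primrec_init (list_map (g := fun _ _ => 0)
    (list_range.comp (nat_mul.comp (const 2) primrec_pairs)) (const 0).to₂)).of_eq
      fun V => by simp [initConfig]

lemma primrec₂_applyUpdate : Primrec₂ applyUpdate :=
  nat_add.comp
    (ite (Primrec.eq.comp (fst.comp fst) (const 2)) (nat_mul.comp (const 2) snd) snd)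
    (ite (Primrec.eq.comp (snd.comp fst) (const 1)) (const 1) (const 0))

lemma primrec₂_applyUpdates : Primrec₂ applyUpdates :=
  list_map (list_range.comp (list_length.comp snd)) <| primrec₂_applyUpdate.comp₂
    ((list_getD _).comp (fst.comp fst) snd).to₂ ((list_getD _).comp (snd.comp fst) snd).to₂

lemma primrec₂_successors : Primrec₂ successors := by
  refine listFilterMap (primrec_trans.comp fst) (ite (.and ?_ ?_) ?_ (const none))
  · exact Primrec.eq.comp (fst.comp snd) (fst.comp (snd.comp fst))
  · exact nat_lt.comp (fst.comp (snd.comp snd)) (primrec_alpha.comp (fst.comp fst))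
  · exact option_some.comp <| pair (fst.comp (snd.comp (snd.comp snd))) <|
      primrec₂_applyUpdates.comp (snd.comp (snd.comp (snd.comp snd))) (snd.comp (snd.comp fst))

lemma primrec₂_reachList_initConfig : Primrec₂ fun V n => reachList V [V.initConfig] n := by
  refine nat_iterate snd (list_cons.comp (primrec_initConfig.comp fst) (const [])) ?_
  exact (list_flatMap snd (primrec₂_successors.comp (fst.comp (fst.comp fst)) snd).to₂).to₂

lemma primrecRel_isAccepting : PrimrecRel fun (c : RawConfig) (V : RawVASS) => V.IsAccepting c := by
  have hfinal : PrimrecRel fun (l : List ℕ) (q : ℕ) => ∃ a ∈ l, a = q :=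
    PrimrecRel.exists_mem_list Primrec.eq
  have hdouble : Primrec fun x : ℕ × RawConfig => 2 * x.1 := nat_mul.comp (const 2) fst
  have hpair : PrimrecRel fun (i : ℕ) (c : RawConfig) => xCounter c i = yCounter c i :=
    Primrec.eq.comp ((list_getD 0).comp (snd.comp snd) hdouble)
      ((list_getD 0).comp (snd.comp snd) (succ.comp hdouble))
  exact ((hfinal.comp (primrec_finals.comp snd) (fst.comp fst)).and
    (hpair.forall_mem_list.comp (list_range.comp (primrec_pairs.comp snd)) fst)).of_eq
      fun x => by simp [IsAccepting]

lemma primrecPred_searchSucceeds : PrimrecPred SearchSucceeds := by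
  have hcandidates : Primrec candidates :=
    list_flatMap (list_range.comp (succ.comp primrec_runBound)) primrec₂_reachList_initConfig
  exact primrecRel_isAccepting.exists_mem_list.comp hcandidates .id

end Primrec

end RawVASS

/-- Language emptiness of restricted laVASS is decidable: a computable function on
encodings of laVASS returns, on every restricted laVASS `V`, the value `true` exactly
when `L(V) ≠ ∅`. -/
theorem restricted_lavass_emptiness_decidable :
    ∃ g : ℕ → Bool, Computable g ∧
      ∀ V : RawVASS, V.Restricted → (g V.enc = true ↔ ∃ w, w ∈ V.Lang) := by
  obtain ⟨g, hcomputable, hg⟩ :=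
    exists_computable_decide_encode RawVASS.primrecPred_searchSucceeds
  exact ⟨g, hcomputable, fun V hV => (hg V).trans (RawVASS.searchSucceeds_iff hV)⟩
end

section
/- Let V be a restricted laVASS of dimension 2d with control-state set Q, |Q| ≥ 2, and set M_i := ⌊|Q|^{(1/8)·32^{i−1}+1}⌋ for 1 ≤ i ≤ d. Let π = c₁ → c₂ → ⋯ → c_n be an accepting run of V (c₁ the initial configuration, c_n a final configuration) such that in c_n the values m₁, …, m_d of the x-counters satisfy m₁ ≥ m₂ ≥ ⋯ ≥ m_d > 0, and for 1 ≤ i ≤ d let X(i) (resp. Y(i)) be the first position j ∈ {1, …, n} at which the counter x_i (resp. y_i) has non-zero value. If Y(i) − X(i) ≤ d·M_i for some 1 ≤ i ≤ d with d·M_i ≥ 3, then n − Y(i) < d·M_i, and consequently in c_n the values m_j, n_j of the counters x_j, y_j satisfy m_j ≤ 2·d·M_i and n_j ≤ 2·d·M_i for all i ≤ j ≤ d. -/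
/-- `M_i := ⌊|Q|^{(1/8)·32^{i−1}+1}⌋`, here indexed `0`-based: `Mfun Q i` corresponds to the
paper's `M_{i+1}`, i.e. the exponent is `32^i/8 + 1`. -/
noncomputable def Mfun (Q i : ℕ) : ℕ := ⌊(Q : ℝ) ^ ((32 : ℝ) ^ i / 8 + 1)⌋₊

/-!
After position `X i` the counter `x_i` grows at most linearly, whereas after position `Y i` the
counter `y_i` grows at least exponentially. Put `k = n - Y i`. Since both counters end with the same
value, `2 ^ k ≤ k + (Y i - X i) + 1 ≤ k + D + 1` with `D = d·M_i`, which forces `k < D` because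
`2 * k + 1 < 2 ^ k` for `k ≥ 3`. The final value of `x_i`, which dominates those of the later
counters, is then at most `k + D + 1 ≤ 2 * D`.
-/

theorem two_mul_add_one_lt_two_pow {k : ℕ} (hk : 3 ≤ k) : 2 * k + 1 < 2 ^ k := by
  obtain ⟨n, rfl⟩ := Nat.exists_eq_add_of_le' hk
  have hn : n < 2 ^ n := Nat.lt_two_pow_self
  rw [pow_add]
  omega

theorem lt_of_two_pow_le_add_add_one {k D : ℕ} (hD : 3 ≤ D) (h : 2 ^ k ≤ k + D + 1) : k < D := by
  by_contra! hDk
  have := two_mul_add_one_lt_two_pow (hD.trans hDk)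
  omega

theorem getElem_le_add_nsmul_of_isChain {α M : Type*} [AddMonoid M] [Preorder M] [AddRightMono M]
    {f : α → M} {c : M} {l : List α} (h : l.IsChain fun a b => f b ≤ f a + c) (p n : ℕ)
    (hn : p + n < l.length) : f l[p + n] ≤ f l[p] + n • c := by
  induction n with
  | zero => simp
  | succ n ih =>
    calc f l[p + (n + 1)] ≤ f l[p + n] + c := h.getElem (p + n) hn
      _ ≤ f l[p] + n • c + c := add_le_add_left (ih (by omega)) c
      _ = f l[p] + (n + 1) • c := by rw [succ_nsmul, add_assoc]

theorem pow_mul_le_getElem_of_isChain {α M : Type*} [Monoid M] [Preorder M] [MulLeftMono M]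
    {f : α → M} {b : M} {l : List α} (h : l.IsChain fun a a' => b * f a ≤ f a') (p n : ℕ)
    (hn : p + n < l.length) : b ^ n * f l[p] ≤ f l[p + n] := by
  induction n with
  | zero => simp
  | succ n ih =>
    calc b ^ (n + 1) * f l[p] = b * (b ^ n * f l[p]) := by rw [pow_succ', mul_assoc]
      _ ≤ b * f l[p + n] := mul_le_mul_right (ih (by omega)) b
      _ ≤ f l[p + (n + 1)] := h.getElem (p + n) hn

namespace LAVASS

variable {σ : Type} {d : ℕ} {V : LAVASS σ d} {k : Fin d} {cs : List V.Config}

/-- A counter incremented or left unchanged by every transition, like the `x_i` of a restricted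
laVASS. -/
def IsUnaryCounter (V : LAVASS σ d) (k : Fin d) : Prop :=
  ∀ t ∈ V.Δ, V.upd t k = (1, 0) ∨ V.upd t k = (1, 1)

/-- A counter to which every transition appends a binary digit, like the `y_i` of a restricted
laVASS. -/
def IsBinaryCounter (V : LAVASS σ d) (k : Fin d) : Prop :=
  ∀ t ∈ V.Δ, V.upd t k = (2, 0) ∨ V.upd t k = (2, 1)

/-- `p` is the first position of `cs`, counted from `0`, at which counter `k` is non-zero. This is
the `X(i)` or `Y(i)` of the paper, according to whether `k` is `x_i` or `y_i`. -/
structure IsFirstNonzero (cs : List V.Config) (k : Fin d) (p : ℕ) : Prop where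
  lt_length : p < cs.length
  ne_zero : cs[p].2 k ≠ 0
  eq_zero_of_lt : ∀ q (hq : q < p), cs[q].2 k = 0

theorem IsUnaryCounter.le_add_one (hk : V.IsUnaryCounter k) {c c' : V.Config} {a : σ}
    (h : V.Step c a c') : c'.2 k ≤ c.2 k + 1 := by
  have hstep := h.2 k
  rcases hk _ h.1 with hupd | hupd <;> simp only [hupd] at hstep <;> omega

theorem IsBinaryCounter.two_mul_le (hk : V.IsBinaryCounter k) {c c' : V.Config} {a : σ}
    (h : V.Step c a c') : 2 * c.2 k ≤ c'.2 k := by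
  have hstep := h.2 k
  rcases hk _ h.1 with hupd | hupd <;> simp only [hupd] at hstep <;> omega

theorem IsRunFromInit.getElem_zero (hrun : V.IsRunFromInit cs) (h : 0 < cs.length) :
    cs[0] = V.initConfig := by
  simpa [List.head?_eq_getElem?, h] using hrun.1

theorem IsFirstNonzero.pos {p : ℕ} (hp : IsFirstNonzero cs k p) (hrun : V.IsRunFromInit cs) :
    0 < p := by
  refine Nat.pos_of_ne_zero ?_
  rintro rfl
  exact hp.ne_zero (by rw [hrun.getElem_zero hp.lt_length]; rfl)

theorem IsUnaryCounter.getLast_le (hk : V.IsUnaryCounter k) (hrun : V.IsRunFromInit cs)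
    (hne : cs ≠ []) {p : ℕ} (hp : IsFirstNonzero cs k p) :
    (cs.getLast hne).2 k ≤ cs.length - p := by
  have hpos := hp.pos hrun
  have hlt := hp.lt_length
  have hchain := hrun.2.imp fun _ _ ⟨_, hstep⟩ => hk.le_add_one hstep
  have hgrowth := getElem_le_add_nsmul_of_isChain hchain (p - 1) (cs.length - p) (by omega)
  have hlast : p - 1 + (cs.length - p) = cs.length - 1 := by omega
  simpa [hlast, hp.eq_zero_of_lt (p - 1) (by omega), List.getLast_eq_getElem] using hgrowth

theorem IsBinaryCounter.two_pow_le_getLast (hk : V.IsBinaryCounter k)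
    (hcs : cs.IsChain fun c c' => ∃ a, V.Step c a c') (hne : cs ≠ []) {p : ℕ}
    (hp : p < cs.length) (h0 : cs[p].2 k ≠ 0) :
    2 ^ (cs.length - 1 - p) ≤ (cs.getLast hne).2 k := by
  have hchain := hcs.imp fun _ _ ⟨_, hstep⟩ => hk.two_mul_le hstep
  have hgrowth := pow_mul_le_getElem_of_isChain hchain p (cs.length - 1 - p) (by omega)
  have hlast : p + (cs.length - 1 - p) = cs.length - 1 := by omega
  simp only [hlast, ← List.getLast_eq_getElem hne] at hgrowth
  exact (Nat.le_mul_of_pos_right _ (Nat.pos_of_ne_zero h0)).trans hgrowth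

end LAVASS

namespace IsRestricted

variable {σ : Type} {d : ℕ} {V : LAVASS σ (2 * d)}

theorem isUnaryCounter_xIdx (hV : IsRestricted d V) (i : Fin d) : V.IsUnaryCounter (xIdx i) :=
  fun t ht => (hV.1 t ht i).1

theorem isBinaryCounter_yIdx (hV : IsRestricted d V) (i : Fin d) : V.IsBinaryCounter (yIdx i) :=
  fun t ht => (hV.1 t ht i).2

theorem mem_Sf_iff (hV : IsRestricted d V) {v : Fin (2 * d) → ℕ} :
    v ∈ V.Sf ↔ ∀ i, v (xIdx i) = v (yIdx i) := by
  rw [hV.2.2, Set.mem_ofPred_eq]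

end IsRestricted

theorem small_path_lemma_general {σ : Type} {d : ℕ} (V : LAVASS σ (2 * d)) (i : Fin d)
    (hx : V.IsUnaryCounter (xIdx i)) (hy : V.IsBinaryCounter (yIdx i))
    (cs : List V.Config) (hne : cs ≠ []) (hrun : V.IsRunFromInit cs)
    (hxy : ∀ j, i ≤ j → (cs.getLast hne).2 (xIdx j) = (cs.getLast hne).2 (yIdx j))
    (hdec : ∀ j, i ≤ j → (cs.getLast hne).2 (xIdx j) ≤ (cs.getLast hne).2 (xIdx i))
    {X Y : ℕ} (hX : LAVASS.IsFirstNonzero cs (xIdx i) X)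
    (hY : LAVASS.IsFirstNonzero cs (yIdx i) Y)
    {D : ℕ} (hD : 3 ≤ D) (hsmall : Y - X ≤ D) :
    cs.length - 1 - Y < D ∧
    ∀ j, i ≤ j →
      (cs.getLast hne).2 (xIdx j) ≤ 2 * D ∧ (cs.getLast hne).2 (yIdx j) ≤ 2 * D := by
  have hYlt := hY.lt_length
  have hupper := hx.getLast_le hrun hne hX
  have hlower := hy.two_pow_le_getLast hrun.2 hne hY.lt_length hY.ne_zero
  rw [← hxy i le_rfl] at hlower
  have hrest : cs.length - 1 - Y < D := lt_of_two_pow_le_add_add_one hD (by omega)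
  have hfinal : ∀ j, i ≤ j → (cs.getLast hne).2 (xIdx j) ≤ 2 * D :=
    fun j hij => (hdec j hij).trans (by omega)
  exact ⟨hrest, fun j hij => ⟨hfinal j hij, hxy j hij ▸ hfinal j hij⟩⟩

/-- Let `V` be a restricted laVASS of dimension `2d` with `|Q| ≥ 2`, and let
`cs = c₁ → ⋯ → c_n` be an accepting run such that the final values of the `x`-counters
satisfy `m₁ ≥ ⋯ ≥ m_d > 0`. Let `X i` (resp. `Y i`) be the first position at which `x_i`
(resp. `y_i`) is non-zero (positions `0`-based). If `Y i − X i ≤ d·M_i` for some `i` with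
`d·M_i ≥ 3`, then `n − Y i < d·M_i`, and consequently in the last configuration the values
of `x_j` and `y_j` are at most `2·d·M_i` for all `j ≥ i`. -/
theorem small_path_lemma {σ : Type} {d : ℕ} (V : LAVASS σ (2 * d))
    (hres : IsRestricted d V)
    (hQ : 2 ≤ @Fintype.card V.Q V.fintypeQ)
    (cs : List V.Config) (hne : cs ≠ [])
    (hrun : V.IsRunFromInit cs)
    (hF : (cs.getLast hne).1 ∈ V.F) (hSf : (cs.getLast hne).2 ∈ V.Sf)
    (hdec : ∀ i j : Fin d, i ≤ j →
      (cs.getLast hne).2 (xIdx j) ≤ (cs.getLast hne).2 (xIdx i))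
    (hpos : ∀ i : Fin d, 0 < (cs.getLast hne).2 (xIdx i))
    (X Y : Fin d → ℕ)
    (hXlt : ∀ i, X i < cs.length) (hYlt : ∀ i, Y i < cs.length)
    (hX0 : ∀ i, (cs.get ⟨X i, hXlt i⟩).2 (xIdx i) ≠ 0)
    (hXmin : ∀ i, ∀ j, ∀ hj : j < cs.length, j < X i → (cs.get ⟨j, hj⟩).2 (xIdx i) = 0)
    (hY0 : ∀ i, (cs.get ⟨Y i, hYlt i⟩).2 (yIdx i) ≠ 0)
    (hYmin : ∀ i, ∀ j, ∀ hj : j < cs.length, j < Y i → (cs.get ⟨j, hj⟩).2 (yIdx i) = 0)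
    (i : Fin d)
    (h3 : 3 ≤ d * Mfun (@Fintype.card V.Q V.fintypeQ) i.1)
    (hsmall : Y i - X i ≤ d * Mfun (@Fintype.card V.Q V.fintypeQ) i.1) :
    cs.length - 1 - Y i < d * Mfun (@Fintype.card V.Q V.fintypeQ) i.1 ∧
    ∀ j : Fin d, i ≤ j →
      (cs.getLast hne).2 (xIdx j) ≤ 2 * d * Mfun (@Fintype.card V.Q V.fintypeQ) i.1 ∧
      (cs.getLast hne).2 (yIdx j) ≤ 2 * d * Mfun (@Fintype.card V.Q V.fintypeQ) i.1 := by
  rw [mul_assoc]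
  exact small_path_lemma_general V i (hres.isUnaryCounter_xIdx i) (hres.isBinaryCounter_yIdx i)
    cs hne hrun (fun j _ => hres.mem_Sf_iff.mp hSf j) (hdec i)
    ⟨hXlt i, hX0 i, fun q hq => hXmin i q (hq.trans (hXlt i)) hq⟩
    ⟨hYlt i, hY0 i, fun q hq => hYmin i q (hq.trans (hYlt i)) hq⟩ h3 hsmall
end
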